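/- arXiv:1310.6056 — 5 statements merged into one kernel-verified Lean document; each statement's English description precedes it below -/
import Mathlib

section
/- For every positive integer n, the number of pairs (x, y) ∈ ℤ² with x² + xy + y² = n, x ≡ 1 (mod 2), and y ≡ 0 (mod 2) equals 2 ∑_{d|n} χ₋₃(d) − 2 ∑_{d|(n/4)} χ₋₃(d). -/
open Finset

/-- The Kronecker symbol `(-3/d)` for positive `d`. -/
def chiM3 (d : ℕ) : ℤ := if d % 3 = 1 then 1 else if d % 3 = 2 then -1 else 0

/-- `Sdiv χ n k = ∑_{d ∣ n/k} χ d`, interpreted as `0` when `k` does not divide `n`. -/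
def Sdiv (χ : ℕ → ℤ) (n k : ℕ) : ℤ := if k ∣ n then ∑ d ∈ (n / k).divisors, χ d else 0

/-! ### The form `x² + xy + y²` as a norm -/

namespace Eisenstein

/-- The norm of `x + yζ`, where `ζ² = ζ - 1`. -/
def norm (z : ℤ × ℤ) : ℤ := z.1 ^ 2 + z.1 * z.2 + z.2 ^ 2

/-- Multiplication of `x + yζ` by `a + bζ`, where `ζ² = ζ - 1`. -/
def mul (a b : ℤ) (z : ℤ × ℤ) : ℤ × ℤ := (a * z.1 - b * z.2, a * z.2 + b * z.1 + b * z.2)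

/-- The elements of norm `n`. -/
def rep (n : ℤ) : Set (ℤ × ℤ) := {z | norm z = n}

lemma norm_mul (a b : ℤ) (z : ℤ × ℤ) : norm (mul a b z) = norm (a, b) * norm z := by
  simp only [norm, mul]; ring

lemma mul_injective {a b : ℤ} (h : norm (a, b) ≠ 0) : Function.Injective (mul a b) := by
  rintro ⟨x, y⟩ ⟨u, v⟩ huv
  simp only [mul, Prod.mk.injEq] at huv
  obtain ⟨h1, h2⟩ := huv
  simp only [norm] at h
  refine Prod.ext (mul_left_cancel₀ h ?_) (mul_left_cancel₀ h ?_)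
  · linear_combination (a + b) * h1 + b * h2
  · linear_combination a * h2 - b * h1

lemma finite_rep (n : ℤ) : (rep n).Finite := by
  refine (Set.finite_Icc ((-2 * |n|, -2 * |n|) : ℤ × ℤ) (2 * |n|, 2 * |n|)).subset ?_
  rintro ⟨x, y⟩ h
  simp only [rep, norm, Set.mem_ofPred_eq] at h
  have hn : n ≤ |n| := le_abs_self n
  have key : ∀ u : ℤ, u ^ 2 ≤ 2 * |n| → -2 * |n| ≤ u ∧ u ≤ 2 * |n| := fun u hu =>
    ⟨by nlinarith [Int.le_self_sq (-u)], by nlinarith [Int.le_self_sq u]⟩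
  have hx := key x (by nlinarith [sq_nonneg (x + 2 * y), sq_nonneg x])
  have hy := key y (by nlinarith [sq_nonneg (2 * x + y), sq_nonneg y])
  exact ⟨⟨hx.1, hy.1⟩, ⟨hx.2, hy.2⟩⟩

lemma ncard_rep_one : (rep 1).ncard = 6 := by
  have : rep 1 = (({(1, 0), (-1, 0), (0, 1), (0, -1), (1, -1), (-1, 1)} : Finset (ℤ × ℤ)) :
      Set (ℤ × ℤ)) := by
    ext ⟨x, y⟩
    simp only [rep, norm, Set.mem_ofPred_eq, Finset.coe_insert, Finset.coe_singleton,
      Set.mem_insert_iff, Set.mem_singleton_iff, Prod.mk.injEq]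
    constructor
    · intro h
      have hx1 : x ≤ 1 := by nlinarith [sq_nonneg (x + 2 * y)]
      have hx2 : -1 ≤ x := by nlinarith [sq_nonneg (x + 2 * y)]
      have hy1 : y ≤ 1 := by nlinarith [sq_nonneg (2 * x + y)]
      have hy2 : -1 ≤ y := by nlinarith [sq_nonneg (2 * x + y)]
      interval_cases x <;> interval_cases y <;> simp_all
    · rintro (⟨rfl, rfl⟩ | ⟨rfl, rfl⟩ | ⟨rfl, rfl⟩ | ⟨rfl, rfl⟩ | ⟨rfl, rfl⟩ | ⟨rfl, rfl⟩) <;>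
        norm_num
  rw [this, Set.ncard_coe_finset]
  rfl

lemma ncard_mul_image {a b : ℤ} (h : norm (a, b) ≠ 0) (s : Set (ℤ × ℤ)) :
    (mul a b '' s).ncard = s.ncard :=
  Set.ncard_image_of_injective s (mul_injective h)

/-- An element is a multiple of `a + bζ` as soon as its product with the conjugate is divisible by
the norm of `a + bζ`. -/
lemma mem_mul_image {a b p n : ℤ} (hp : p ≠ 0) (hab : norm (a, b) = p) {z : ℤ × ℤ}
    (hz : norm z = p * n) (h1 : p ∣ (a + b) * z.1 + b * z.2) (h2 : p ∣ a * z.2 - b * z.1) :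
    z ∈ mul a b '' rep n := by
  obtain ⟨u, hu⟩ := h1
  obtain ⟨v, hv⟩ := h2
  have hmul : mul a b (u, v) = z := by
    simp only [norm] at hab
    refine Prod.ext (mul_left_cancel₀ hp ?_) (mul_left_cancel₀ hp ?_)
    · simp only [mul]
      linear_combination (-a) * hu + b * hv + z.1 * hab
    · simp only [mul]
      linear_combination (-b) * hu - (a + b) * hv + z.2 * hab
  refine ⟨(u, v), ?_, hmul⟩
  have := norm_mul a b (u, v)
  rw [hmul, hz, hab] at this
  exact (mul_left_cancel₀ hp this).symm

lemma dvd_of_dvd_norm_of_dvd {p u v : ℤ} (hp : Prime p) (h : p ∣ norm (u, v)) (hv : p ∣ v) :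
    p ∣ u := by
  refine hp.dvd_of_dvd_pow (n := 2) ?_
  have : u ^ 2 = norm (u, v) - v * (u + v) := by simp only [norm]; ring
  rw [this]
  exact dvd_sub h (hv.mul_right _)

/-- The elements of norm `pn` divisible by `p` correspond to those of norm `n / p`. -/
lemma scale_image_eq {p n : ℤ} (hp : p ≠ 0) :
    mul p 0 '' {z | p * norm z = n} = {z | norm z = p * n ∧ p ∣ z.1 ∧ p ∣ z.2} := by
  ext ⟨x, y⟩
  constructor
  · rintro ⟨⟨u, v⟩, h, h'⟩
    simp only [mul, Prod.mk.injEq] at h'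
    obtain ⟨rfl, rfl⟩ := h'
    refine ⟨?_, ⟨u, by simp⟩, ⟨v, by simp⟩⟩
    rw [← h.out]
    simp only [norm]; ring
  · rintro ⟨h, ⟨u, hu⟩, ⟨v, hv⟩⟩
    simp only at hu hv
    subst hu hv
    refine ⟨(u, v), mul_left_cancel₀ hp ?_, by simp [mul]⟩
    rw [← h]
    simp only [norm]; ring

lemma norm_scalar_ne_zero {p : ℤ} (hp : p ≠ 0) : norm (p, 0) ≠ 0 := by
  simpa [norm] using hp

/-! ### Recurrences for the number of representations -/

lemma ncard_rep_three_mul (n : ℤ) : (rep (3 * n)).ncard = (rep n).ncard := by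
  have h3 : norm (1, 1) = 3 := by norm_num [norm]
  rw [← ncard_mul_image (a := 1) (b := 1) (by norm_num [norm]) (rep n)]
  congr 1
  ext z
  constructor
  · intro hz
    have hd : (3 : ℤ) ∣ z.2 - z.1 := by
      refine Int.prime_three.dvd_of_dvd_pow (n := 2) ⟨n - z.1 * z.2, ?_⟩
      have := hz.out
      simp only [norm] at this
      linear_combination this
    exact mem_mul_image (by norm_num) h3 hz (by omega) (by omega)
  · rintro ⟨w, hw, rfl⟩
    simp only [rep, Set.mem_ofPred_eq, norm_mul, h3, hw.out]

lemma dvd_of_dvd_norm_of_mod_two {p : ℕ} (hp : p.Prime) (h2 : p % 3 = 2) {x y : ℤ}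
    (h : (p : ℤ) ∣ norm (x, y)) : (p : ℤ) ∣ x ∧ (p : ℤ) ∣ y := by
  have hp' : Prime (p : ℤ) := Nat.prime_iff_prime_int.mp hp
  have : Fact p.Prime := ⟨hp⟩
  have hsymm : norm (x, y) = norm (y, x) := by simp only [norm]; ring
  by_cases hx : (p : ℤ) ∣ x
  · exact ⟨hx, dvd_of_dvd_norm_of_dvd hp' (hsymm ▸ h) hx⟩
  by_cases hy : (p : ℤ) ∣ y
  · exact ⟨dvd_of_dvd_norm_of_dvd hp' h hy, hy⟩
  exfalso
  rw [← ZMod.intCast_zmod_eq_zero_iff_dvd] at h hx hy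
  simp only [norm] at h
  push_cast at h
  generalize (x : ZMod p) = X at *
  generalize (y : ZMod p) = Y at *
  have hcube : X ^ 3 = Y ^ 3 := by linear_combination (X - Y) * h
  have hX := ZMod.pow_card_sub_one_eq_one hx
  have hY := ZMod.pow_card_sub_one_eq_one hy
  have hk : p - 1 = 3 * (p / 3) + 1 := by omega
  rw [hk, pow_succ, pow_mul] at hX hY
  have hXY : X = Y := by
    rw [← hcube] at hY
    have h0 : (X ^ 3) ^ (p / 3) ≠ 0 := pow_ne_zero _ (pow_ne_zero _ hx)
    exact mul_left_cancel₀ h0 (hX.trans hY.symm)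
  subst hXY
  have h3 : (3 : ZMod p) * X ^ 2 = 0 := by linear_combination h
  rcases mul_eq_zero.mp h3 with h3 | h3
  · have : p ∣ 3 := (ZMod.natCast_eq_zero_iff 3 p).mp (by exact_mod_cast h3)
    have := (Nat.prime_dvd_prime_iff_eq hp Nat.prime_three).mp this
    omega
  · exact hx (pow_eq_zero_iff (by norm_num) |>.mp h3)

lemma ncard_rep_inert_mul {p : ℕ} (hp : p.Prime) (h2 : p % 3 = 2) (n : ℤ) :
    (rep (p * n)).ncard = {z | (p : ℤ) * norm z = n}.ncard := by
  have hp0 : (p : ℤ) ≠ 0 := by exact_mod_cast hp.ne_zero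
  rw [← ncard_mul_image (norm_scalar_ne_zero hp0) {z | (p : ℤ) * norm z = n}, scale_image_eq hp0]
  congr 1
  ext z
  exact ⟨fun h => ⟨h, dvd_of_dvd_norm_of_mod_two hp h2 ⟨n, h⟩⟩, fun h => h.1⟩

/-- A short vector in the lattice `x ≡ ty (mod p)`, by the pigeonhole principle. -/
lemma exists_short_vector {p : ℕ} (hp : p.Prime) (t : ZMod p) :
    ∃ x y : ℤ, (x, y) ≠ 0 ∧ x ^ 2 < p ∧ y ^ 2 < p ∧ (x : ZMod p) = t * y := by
  have : Fact p.Prime := ⟨hp⟩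
  set k := Nat.sqrt p
  let s := Finset.range (k + 1) ×ˢ Finset.range (k + 1)
  have hcard : (Finset.univ : Finset (ZMod p)).card < s.card := by
    rw [Finset.card_univ, ZMod.card, Finset.card_product, Finset.card_range]
    exact Nat.lt_succ_sqrt p
  obtain ⟨⟨a, b⟩, hab, ⟨c, d⟩, hcd, hne, heq⟩ := Finset.exists_ne_map_eq_of_card_lt_of_maps_to hcard
    (f := fun w : ℕ × ℕ => (w.1 : ZMod p) - t * w.2) (fun _ _ => Finset.mem_univ _)
  simp only [s, Finset.mem_product, Finset.mem_range] at hab hcd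
  have hk : (k : ℤ) ^ 2 < p := by
    have hle : k * k ≤ p := Nat.sqrt_le p
    have hne : k * k ≠ p := fun h => by
      have := hp.prime.irreducible.not_isSquare
      exact this ⟨k, h.symm⟩
    have : k ^ 2 < p := by rw [sq]; omega
    exact_mod_cast this
  have hsq : ∀ u v : ℕ, u < k + 1 → v < k + 1 → ((u : ℤ) - v) ^ 2 < p := fun u v hu hv =>
    lt_of_le_of_lt (sq_le_sq' (by omega) (by omega)) hk
  refine ⟨a - c, b - d, ?_, hsq _ _ hab.1 hcd.1, hsq _ _ hab.2 hcd.2, ?_⟩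
  · intro h
    simp only [Prod.mk_eq_zero] at h
    exact hne (Prod.ext (by simp only; omega) (by simp only; omega))
  · push_cast
    linear_combination heq

lemma exists_root_of_mod_one {p : ℕ} (hp : p.Prime) (h1 : p % 3 = 1) :
    ∃ t : ZMod p, t ^ 2 + t + 1 = 0 := by
  have : Fact p.Prime := ⟨hp⟩
  have hdvd : 3 ∣ Fintype.card (ZMod p)ˣ := by
    rw [ZMod.card_units]
    omega
  obtain ⟨u, hu⟩ := exists_prime_orderOf_dvd_card 3 hdvd
  have hu3 : (u : ZMod p) ^ 3 = 1 := by
    have := pow_orderOf_eq_one u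
    rw [hu] at this
    simpa using congrArg Units.val this
  have hu1 : (u : ZMod p) - 1 ≠ 0 := by
    intro h
    have : u = 1 := Units.ext (by simpa using sub_eq_zero.mp h)
    simp [this] at hu
  exact ⟨u, mul_left_cancel₀ hu1 (by linear_combination hu3)⟩

lemma exists_norm_eq_of_mod_one {p : ℕ} (hp : p.Prime) (h1 : p % 3 = 1) :
    ∃ a b : ℤ, norm (a, b) = p := by
  obtain ⟨t, ht⟩ := exists_root_of_mod_one hp h1
  obtain ⟨x, y, hne, hx, hy, hxy⟩ := exists_short_vector hp t
  have hdvd : (p : ℤ) ∣ norm (x, y) := by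
    rw [← ZMod.intCast_zmod_eq_zero_iff_dvd]
    simp only [norm]
    push_cast
    rw [hxy]
    linear_combination (y : ZMod p) ^ 2 * ht
  obtain ⟨m, hm⟩ := hdvd
  have hm' : x ^ 2 + x * y + y ^ 2 = p * m := hm
  have hp0 : (0 : ℤ) < p := by exact_mod_cast hp.pos
  have hpos : 0 < norm (x, y) := by
    have : 0 < x ^ 2 ∨ 0 < y ^ 2 := by
      by_contra! h
      exact hne (by
        have hx0 : x = 0 := by nlinarith [sq_nonneg x]
        have hy0 : y = 0 := by nlinarith [sq_nonneg y]
        simp [hx0, hy0])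
    simp only [norm]
    rcases this with h | h
    · nlinarith [sq_nonneg (x + 2 * y)]
    · nlinarith [sq_nonneg (2 * x + y)]
  have hm0 : 0 < m := by
    rw [hm] at hpos
    exact pos_of_mul_pos_right hpos hp0.le
  have hm3 : m < 3 := by
    by_contra! h
    nlinarith [sq_nonneg (x - y)]
  obtain rfl | rfl : m = 1 ∨ m = 2 := by omega
  · exact ⟨x, y, by rw [hm, mul_one]⟩
  · exfalso
    obtain ⟨⟨u, rfl⟩, ⟨v, rfl⟩⟩ :=
      dvd_of_dvd_norm_of_mod_two Nat.prime_two (by norm_num) ⟨(p : ℤ), by rw [hm]; push_cast; ring⟩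
    have hpe : (p : ℤ) = 2 * norm (u, v) := by
      simp only [norm]
      push_cast at hm'
      linarith
    have h2p : 2 ∣ p := by
      have : (2 : ℤ) ∣ p := ⟨_, hpe⟩
      exact_mod_cast this
    have := (Nat.prime_dvd_prime_iff_eq Nat.prime_two hp).mp h2p
    omega

lemma not_dvd_two_mul_add {p : ℕ} (hp : p.Prime) (h1 : p % 3 = 1) {a b : ℤ}
    (hab : norm (a, b) = p) : ¬ (p : ℤ) ∣ 2 * a + b := by
  have hp' : Prime (p : ℤ) := Nat.prime_iff_prime_int.mp hp
  have hp0 : (p : ℤ) ≠ 0 := hp'.ne_zero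
  have hp7 : 4 < (p : ℤ) := by
    have h2 := hp.two_le
    have : p ≠ 4 := fun h => by subst h; exact absurd hp (by norm_num)
    omega
  intro h
  simp only [norm] at hab
  have hb : (p : ℤ) ∣ b := by
    have : (p : ℤ) ∣ 3 * b ^ 2 := by
      have heq : 3 * b ^ 2 = 4 * p - (2 * a + b) * (2 * a + b) := by rw [← hab]; ring
      rw [heq]
      exact dvd_sub (dvd_mul_left _ _) (h.mul_right _)
    rcases hp'.dvd_or_dvd this with h3 | h3
    · have := Int.le_of_dvd (by norm_num) h3
      omega
    · exact hp'.dvd_of_dvd_pow h3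
  obtain ⟨u, hu⟩ := h
  obtain ⟨v, hv⟩ := hb
  have : (p : ℤ) ∣ 4 := by
    refine ⟨u ^ 2 + 3 * v ^ 2, mul_left_cancel₀ hp0 ?_⟩
    linear_combination (-4) * hab + (2 * a + b + p * u) * hu + 3 * (b + p * v) * hv
  have := Int.le_of_dvd (by norm_num) this
  omega

lemma ncard_rep_split_mul {p : ℕ} (hp : p.Prime) (h1 : p % 3 = 1) (n : ℤ) :
    (rep (p * n)).ncard + {z | (p : ℤ) * norm z = n}.ncard = 2 * (rep n).ncard := by
  obtain ⟨a, b, hab⟩ := exists_norm_eq_of_mod_one hp h1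
  have hp' : Prime (p : ℤ) := Nat.prime_iff_prime_int.mp hp
  have hp0 : (p : ℤ) ≠ 0 := hp'.ne_zero
  have hab' : norm (a + b, -b) = p := by rw [← hab]; simp only [norm]; ring
  have hnd := not_dvd_two_mul_add hp h1 hab
  have hunion : mul a b '' rep n ∪ mul (a + b) (-b) '' rep n = rep (p * n) := by
    ext ⟨x, y⟩
    constructor
    · rintro (⟨w, hw, h⟩ | ⟨w, hw, h⟩) <;> rw [← h]
      · simp only [rep, Set.mem_ofPred_eq, norm_mul, hab, hw.out]
      · simp only [rep, Set.mem_ofPred_eq, norm_mul, hab', hw.out]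
    · intro hz
      have hz' : norm (x, y) = p * n := hz
      have hprod : (p : ℤ) ∣ (a * y - b * x) * (a * y + b * x + b * y) := by
        have : (a * y - b * x) * (a * y + b * x + b * y)
            = y ^ 2 * norm (a, b) - b ^ 2 * norm (x, y) := by simp only [norm]; ring
        rw [this, hab, hz']
        exact dvd_sub (dvd_mul_left _ _) ((dvd_mul_right _ _).mul_left _)
      rcases hp'.dvd_or_dvd hprod with h | h
      · refine Or.inl (mem_mul_image hp0 hab hz' ?_ h)
        refine dvd_of_dvd_norm_of_dvd hp' ?_ h
        have : norm ((a + b) * x + b * y, a * y - b * x) = norm (a, b) * norm (x, y) := by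
          simp only [norm]; ring
        rw [this, hab]
        exact dvd_mul_right _ _
      · have h' : (p : ℤ) ∣ (a + b) * y - -b * x := by rwa [show (a + b) * y - -b * x = a * y + b * x + b * y by ring]
        refine Or.inr (mem_mul_image hp0 hab' hz' ?_ h')
        refine dvd_of_dvd_norm_of_dvd hp' ?_ h'
        have : norm ((a + b + -b) * x + -b * y, (a + b) * y - -b * x)
            = norm (a, b) * norm (x, y) := by
          simp only [norm]; ring
        rw [this, hab]
        exact dvd_mul_right _ _
  have hinter : mul a b '' rep n ∩ mul (a + b) (-b) '' rep n
      = {z | norm z = p * n ∧ (p : ℤ) ∣ z.1 ∧ (p : ℤ) ∣ z.2} := by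
    ext ⟨x, y⟩
    constructor
    · rintro ⟨hA, hB⟩
      have hz : norm (x, y) = p * n := (hunion.subset (Or.inl hA)).out
      obtain ⟨⟨u, v⟩, -, hA⟩ := hA
      obtain ⟨⟨r, s⟩, -, hB⟩ := hB
      simp only [mul, Prod.mk.injEq] at hA hB
      simp only [norm] at hab
      refine ⟨hz, (hp'.dvd_or_dvd (a := 2 * a + b) ⟨u + r, ?_⟩).resolve_left hnd,
        (hp'.dvd_or_dvd (a := 2 * a + b) ⟨v + s, ?_⟩).resolve_left hnd⟩
      · linear_combination (u + r) * hab - (a + b) * hA.1 - b * hA.2 - a * hB.1 + b * hB.2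
      · linear_combination (v + s) * hab - a * hA.2 + b * hA.1 - (a + b) * hB.2 - b * hB.1
    · rintro ⟨hz, hx, hy⟩
      exact ⟨mem_mul_image hp0 hab hz (dvd_add (hx.mul_left _) (hy.mul_left _))
          (dvd_sub (hy.mul_left _) (hx.mul_left _)),
        mem_mul_image hp0 hab' hz (dvd_add (hx.mul_left _) (hy.mul_left _))
          (dvd_sub (hy.mul_left _) (hx.mul_left _))⟩
  have hcard := Set.ncard_union_add_ncard_inter (mul a b '' rep n) (mul (a + b) (-b) '' rep n)
    ((finite_rep n).image _) ((finite_rep n).image _)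
  rw [hunion, hinter, ← scale_image_eq hp0, ncard_mul_image (norm_scalar_ne_zero hp0),
    ncard_mul_image (by rwa [hab]), ncard_mul_image (by rwa [hab'])] at hcard
  rw [hcard, two_mul]

/-! ### The divisor sum -/

lemma chiM3_mul (a b : ℕ) : chiM3 (a * b) = chiM3 a * chiM3 b := by
  have ha : a % 3 < 3 := Nat.mod_lt _ (by norm_num)
  have hb : b % 3 < 3 := Nat.mod_lt _ (by norm_num)
  simp only [chiM3, Nat.mul_mod a b 3]
  generalize a % 3 = u at *
  generalize b % 3 = v at *
  interval_cases u <;> interval_cases v <;> norm_num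

lemma Sdiv_one (χ : ℕ → ℤ) (n : ℕ) : Sdiv χ n 1 = ∑ d ∈ n.divisors, χ d := by
  simp [Sdiv]

lemma Sdiv_prime_mul {p m : ℕ} (hp : p.Prime) (hm : 0 < m) :
    Sdiv chiM3 (p * m) 1 = (1 + chiM3 p) * Sdiv chiM3 m 1 - chiM3 p * Sdiv chiM3 m p := by
  have hinj : Function.Injective (p * ·) := mul_right_injective₀ hp.ne_zero
  have hsum : ∀ s : Finset ℕ, ∑ d ∈ s.image (p * ·), chiM3 d = chiM3 p * ∑ d ∈ s, chiM3 d := by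
    intro s
    rw [Finset.sum_image hinj.injOn, Finset.mul_sum]
    exact Finset.sum_congr rfl fun d _ => chiM3_mul p d
  have hunion : m.divisors ∪ m.divisors.image (p * ·) = (p * m).divisors := by
    ext d
    simp only [Finset.mem_union, Finset.mem_image, Nat.mem_divisors]
    have hpm : p * m ≠ 0 := (Nat.mul_pos hp.pos hm).ne'
    constructor
    · rintro (⟨h, -⟩ | ⟨e, ⟨h, -⟩, rfl⟩)
      · exact ⟨h.mul_left p, hpm⟩
      · exact ⟨Nat.mul_dvd_mul_left p h, hpm⟩
    · rintro ⟨h, -⟩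
      by_cases hpd : p ∣ d
      · obtain ⟨e, rfl⟩ := hpd
        exact Or.inr ⟨e, ⟨Nat.dvd_of_mul_dvd_mul_left hp.pos h, hm.ne'⟩, rfl⟩
      · exact Or.inl ⟨((hp.coprime_iff_not_dvd.mpr hpd).symm).dvd_of_dvd_mul_left h, hm.ne'⟩
  have hinter : ∑ d ∈ m.divisors ∩ m.divisors.image (p * ·), chiM3 d
      = chiM3 p * Sdiv chiM3 m p := by
    by_cases hpm : p ∣ m
    · rw [Sdiv, if_pos hpm, ← hsum]
      obtain ⟨k, rfl⟩ := hpm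
      have hk : k ≠ 0 := by rintro rfl; simp at hm
      rw [Nat.mul_div_cancel_left k hp.pos]
      congr 1
      ext d
      simp only [Finset.mem_inter, Finset.mem_image, Nat.mem_divisors]
      constructor
      · rintro ⟨⟨h, -⟩, e, -, rfl⟩
        exact ⟨e, ⟨Nat.dvd_of_mul_dvd_mul_left hp.pos h, hk⟩, rfl⟩
      · rintro ⟨e, ⟨h, -⟩, rfl⟩
        exact ⟨⟨Nat.mul_dvd_mul_left p h, hm.ne'⟩, e, ⟨h.mul_left p, hm.ne'⟩, rfl⟩
    · rw [Sdiv, if_neg hpm, mul_zero]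
      refine Finset.sum_eq_zero fun d hd => ?_
      simp only [Finset.mem_inter, Finset.mem_image, Nat.mem_divisors] at hd
      obtain ⟨⟨h, -⟩, e, -, rfl⟩ := hd
      exact absurd ((dvd_mul_right p e).trans h) hpm
  have := Finset.sum_union_inter (s₁ := m.divisors) (s₂ := m.divisors.image (p * ·)) (f := chiM3)
  rw [hunion, hinter, hsum] at this
  rw [Sdiv_one, Sdiv_one]
  linear_combination this

/-- If representations of `n / k` are counted by divisors of `n / k`, the count of solutions of
`k N(z) = n` is given by `Sdiv`, whether or not `k` divides `n`. -/
lemma ncard_mul_norm_eq {n k : ℕ} (hk : 0 < k)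
    (h : k ∣ n → ((rep (n / k : ℕ)).ncard : ℤ) = 6 * Sdiv chiM3 (n / k) 1) :
    ({z | (k : ℤ) * norm z = n}.ncard : ℤ) = 6 * Sdiv chiM3 n k := by
  have hk0 : (k : ℤ) ≠ 0 := by exact_mod_cast hk.ne'
  by_cases hkn : k ∣ n
  · rw [Sdiv, if_pos hkn, ← Sdiv_one, ← h hkn]
    obtain ⟨m, rfl⟩ := hkn
    rw [Nat.mul_div_cancel_left m hk]
    congr 2
    ext z
    simp only [rep, Set.mem_ofPred_eq, Nat.cast_mul]
    exact mul_right_inj' hk0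
  · have : {z | (k : ℤ) * norm z = n} = ∅ := by
      ext z
      simp only [Set.mem_ofPred_eq, Set.mem_empty_iff_false, iff_false]
      intro hz
      exact hkn (Int.natCast_dvd_natCast.mp ⟨norm z, hz.symm⟩)
    simp [Sdiv, if_neg hkn, this]

theorem ncard_rep (n : ℕ) (hn : 0 < n) : ((rep n).ncard : ℤ) = 6 * Sdiv chiM3 n 1 := by
  induction n using Nat.strong_induction_on with
  | _ n ih =>
  by_cases h1 : n = 1
  · subst h1
    rw [Nat.cast_one, ncard_rep_one]
    simp [Sdiv, chiM3]
  have hp := Nat.minFac_prime h1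
  obtain ⟨m, hm⟩ := Nat.minFac_dvd n
  generalize n.minFac = p at hp hm
  subst hm
  have hm0 : 0 < m := Nat.pos_of_mul_pos_left hn
  have hlt : m < p * m := lt_mul_of_one_lt_left hm0 hp.one_lt
  have ihm := ih m hlt hm0
  have hdiv : ({z | (p : ℤ) * norm z = m}.ncard : ℤ) = 6 * Sdiv chiM3 m p := by
    refine ncard_mul_norm_eq hp.pos fun hpm => ?_
    exact ih _ ((Nat.div_le_self m p).trans_lt hlt) (Nat.div_pos (Nat.le_of_dvd hm0 hpm) hp.pos)
  rw [Sdiv_prime_mul hp hm0]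
  push_cast
  obtain h | h | h : p % 3 = 0 ∨ p % 3 = 1 ∨ p % 3 = 2 := by omega
  · have : p = 3 := ((Nat.prime_dvd_prime_iff_eq Nat.prime_three hp).mp
      (Nat.dvd_of_mod_eq_zero h)).symm
    subst this
    have := ncard_rep_three_mul m
    simp only [chiM3]
    push_cast
    rw [this, ihm]
    norm_num
  · have hr := ncard_rep_split_mul hp h m
    zify at hr
    simp only [chiM3, h] at hdiv ⊢
    norm_num
    linear_combination hr - hdiv + 2 * ihm
  · rw [ncard_rep_inert_mul hp h, hdiv]
    simp [chiM3, h]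

/-! ### Splitting by parity -/

/-- Multiplication by `ζ` permutes the three nonzero residue classes modulo `2`. -/
lemma ncard_rep_eq_parity (n : ℤ) :
    (rep n).ncard = {z | 4 * norm z = n}.ncard
      + 3 * {z | norm z = n ∧ z.1 % 2 = 1 ∧ z.2 % 2 = 0}.ncard := by
  set T := {z : ℤ × ℤ | norm z = n ∧ z.1 % 2 = 1 ∧ z.2 % 2 = 0}
  set E := mul 2 0 '' {z | 4 * norm z = n} with hE
  have hζ : norm (0, 1) ≠ 0 := by norm_num [norm]
  have hζ' : norm (-1, 1) ≠ 0 := by norm_num [norm]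
  have hmemE : ∀ z, z ∈ E ↔ norm z = n ∧ z.1 % 2 = 0 ∧ z.2 % 2 = 0 := by
    rintro ⟨x, y⟩
    constructor
    · rintro ⟨⟨u, v⟩, h, h'⟩
      simp only [mul, Prod.mk.injEq] at h'
      obtain ⟨rfl, rfl⟩ := h'
      refine ⟨?_, by simp only; omega, by simp only; omega⟩
      rw [← h.out]
      simp only [norm]; ring
    · rintro ⟨h, hx, hy⟩
      obtain ⟨u, rfl⟩ := Int.dvd_of_emod_eq_zero hx
      obtain ⟨v, rfl⟩ := Int.dvd_of_emod_eq_zero hy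
      refine ⟨(u, v), ?_, by simp [mul]⟩
      simp only [Set.mem_ofPred_eq]
      rw [← h]
      simp only [norm]; ring
  have hmem1 : ∀ z, z ∈ mul 0 1 '' T ↔ norm z = n ∧ z.1 % 2 = 0 ∧ z.2 % 2 = 1 := by
    rintro ⟨x, y⟩
    constructor
    · rintro ⟨⟨u, v⟩, ⟨h, hu, hv⟩, h'⟩
      simp only [mul, Prod.mk.injEq] at h' hu hv
      obtain ⟨rfl, rfl⟩ := h'
      refine ⟨?_, by simp only; omega, by simp only; omega⟩
      rw [← h]
      simp only [norm]; ring
    · rintro ⟨h, hx, hy⟩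
      simp only at hx hy
      refine ⟨(x + y, -x), ⟨?_, by simp only; omega, by simp only; omega⟩, by simp [mul]⟩
      rw [← h]
      simp only [norm]; ring
  have hmem2 : ∀ z, z ∈ mul (-1) 1 '' T ↔ norm z = n ∧ z.1 % 2 = 1 ∧ z.2 % 2 = 1 := by
    rintro ⟨x, y⟩
    constructor
    · rintro ⟨⟨u, v⟩, ⟨h, hu, hv⟩, h'⟩
      simp only [mul, Prod.mk.injEq] at h' hu hv
      obtain ⟨rfl, rfl⟩ := h'
      refine ⟨?_, by simp only; omega, by simp only; omega⟩
      rw [← h]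
      simp only [norm]; ring
    · rintro ⟨h, hx, hy⟩
      simp only at hx hy
      refine ⟨(y, -x - y), ⟨?_, by simp only; omega, by simp only; omega⟩,
        Prod.ext (by simp only [mul]; ring) (by simp only [mul]; ring)⟩
      rw [← h]
      simp only [norm]; ring
  have hfin : ∀ s : Set (ℤ × ℤ), (∀ z ∈ s, norm z = n) → s.Finite := fun s hs =>
    (finite_rep n).subset hs
  have hunion : rep n = (E ∪ T) ∪ (mul 0 1 '' T ∪ mul (-1) 1 '' T) := by
    ext z
    have hmemT : z ∈ T ↔ norm z = n ∧ z.1 % 2 = 1 ∧ z.2 % 2 = 0 := Iff.rfl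
    simp only [Set.mem_union, hmemE, hmem1, hmem2, hmemT, rep, Set.mem_ofPred_eq]
    have h1 := Int.emod_two_eq_zero_or_one z.1
    have h2 := Int.emod_two_eq_zero_or_one z.2
    tauto
  have hEf : E.Finite := hfin E fun z hz => ((hmemE z).mp hz).1
  have hTf : T.Finite := hfin T fun z hz => hz.1
  have hd1 : Disjoint E T := Set.disjoint_left.mpr fun z h h' => by
    have := (hmemE z).mp h
    have := h'.2
    omega
  have hd2 : Disjoint (mul 0 1 '' T) (mul (-1) 1 '' T) := Set.disjoint_left.mpr fun z h h' => by
    have := (hmem1 z).mp h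
    have := (hmem2 z).mp h'
    omega
  have hd3 : Disjoint (E ∪ T) (mul 0 1 '' T ∪ mul (-1) 1 '' T) :=
    Set.disjoint_left.mpr fun z h h' => by
      have h1 : z.2 % 2 = 0 := h.elim (fun h => ((hmemE z).mp h).2.2) (fun h => h.2.2)
      have h2 : z.2 % 2 = 1 :=
        h'.elim (fun h => ((hmem1 z).mp h).2.2) (fun h => ((hmem2 z).mp h).2.2)
      omega
  rw [hunion, Set.ncard_union_eq hd3 (hEf.union hTf) ((hTf.image _).union (hTf.image _)),
    Set.ncard_union_eq hd1 hEf hTf, Set.ncard_union_eq hd2 (hTf.image _) (hTf.image _),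
    ncard_mul_image hζ, ncard_mul_image hζ', hE,
    ncard_mul_image (norm_scalar_ne_zero two_ne_zero)]
  ring

end Eisenstein

theorem rep_x2_xy_y2_x1mod2_y0mod2 (n : ℕ) (hn : 0 < n) :
    ({p : ℤ × ℤ | p.1 ^ 2 + p.1 * p.2 + p.2 ^ 2 = (n : ℤ) ∧ p.1 % 2 = 1 ∧ p.2 % 2 = 0}.ncard : ℤ) =
      2 * Sdiv chiM3 n 1 - 2 * Sdiv chiM3 n 4 := by
  have hsplit := Eisenstein.ncard_rep_eq_parity n
  simp only [Eisenstein.norm] at hsplit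
  zify at hsplit
  have hrep := Eisenstein.ncard_rep n hn
  have hdiv := Eisenstein.ncard_mul_norm_eq (n := n) (k := 4) (by norm_num)
    fun h => Eisenstein.ncard_rep _ (Nat.div_pos (Nat.le_of_dvd hn h) (by norm_num))
  simp only [Eisenstein.norm] at hdiv
  push_cast at hdiv
  linarith
end

section
/- For every positive integer n, the number of pairs (x, y) ∈ ℤ² with x² + xy + y² = n, x ≡ 1 (mod 3), and y ≡ 0 (mod 3) equals ∑_{d|n} χ₋₃(d) − ∑_{d|(n/3)} χ₋₃(d). -/
open Finset

/-- The representations of `n` by `x² + xy + y²` with `x ≡ 1` and `y ≡ 0` modulo `3`. -/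
def primaryReps (n : ℕ) : Set (ℤ × ℤ) :=
  {p : ℤ × ℤ | p.1 ^ 2 + p.1 * p.2 + p.2 ^ 2 = (n : ℤ) ∧ p.1 % 3 = 1 ∧ p.2 % 3 = 0}

/-- Multiplication of Eisenstein integers, with `(x, y)` standing for `x - yω`. -/
def eisMul (u v : ℤ × ℤ) : ℤ × ℤ :=
  (u.1 * v.1 - u.2 * v.2, u.1 * v.2 + u.2 * v.1 + u.2 * v.2)

/-- Complex conjugation of Eisenstein integers, with `(x, y)` standing for `x - yω`. -/
def eisConj (u : ℤ × ℤ) : ℤ × ℤ := (u.1 + u.2, -u.2)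

theorem primaryReps_finite (n : ℕ) : (primaryReps n).Finite := by
  refine ((Set.finite_Icc (-(2 * n : ℤ)) (2 * n)).prod
    (Set.finite_Icc (-(2 * n : ℤ)) (2 * n))).subset ?_
  rintro ⟨x, y⟩ ⟨h, -, -⟩
  simp only at h
  simp only [Set.mem_prod, Set.mem_Icc]
  have hx : x ^ 2 ≤ (2 * n : ℤ) ^ 2 := by nlinarith [sq_nonneg (x + 2 * y), sq_nonneg x]
  have hy : y ^ 2 ≤ (2 * n : ℤ) ^ 2 := by nlinarith [sq_nonneg (2 * x + y), sq_nonneg y]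
  exact ⟨abs_le.mp (abs_le_of_sq_le_sq hx (by positivity)),
    abs_le.mp (abs_le_of_sq_le_sq hy (by positivity))⟩

theorem primaryReps_eq_empty {n : ℕ} (hn : 3 ∣ n) : primaryReps n = ∅ := by
  refine Set.eq_empty_of_forall_notMem ?_
  rintro ⟨x, y⟩ ⟨h, hx, hy⟩
  simp only at h hx hy
  obtain ⟨k, rfl⟩ := hn
  obtain ⟨a, rfl⟩ : ∃ a, x = 3 * a + 1 := ⟨x / 3, by omega⟩
  obtain ⟨b, rfl⟩ : ∃ b, y = 3 * b := ⟨y / 3, by omega⟩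
  push_cast at h
  have : 3 * (k - 3 * a ^ 2 - 2 * a - 3 * a * b - b - 3 * b ^ 2) = 1 := by linarith
  omega

theorem primaryReps_one : primaryReps 1 = {(1, 0)} := by
  ext ⟨x, y⟩
  simp only [primaryReps, Set.mem_ofPred_eq, Set.mem_singleton_iff, Prod.mk.injEq]
  constructor
  · rintro ⟨h, hx, hy⟩
    push_cast at h
    have h1 : x ≤ 1 := by nlinarith [sq_nonneg (x + 2 * y)]
    have h2 : -1 ≤ x := by nlinarith [sq_nonneg (x + 2 * y)]
    have h3 : y ≤ 1 := by nlinarith [sq_nonneg (2 * x + y)]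
    have h4 : -1 ≤ y := by nlinarith [sq_nonneg (2 * x + y)]
    omega
  · rintro ⟨rfl, rfl⟩
    norm_num

theorem eisMul_mem {m n : ℕ} {u v : ℤ × ℤ} (hu : u ∈ primaryReps m) (hv : v ∈ primaryReps n) :
    eisMul u v ∈ primaryReps (m * n) := by
  obtain ⟨x, y⟩ := u
  obtain ⟨a, b⟩ := v
  obtain ⟨h, hx, hy⟩ := hu
  obtain ⟨h', ha, hb⟩ := hv
  simp only at h hx hy h' ha hb
  refine ⟨?_, ?_, ?_⟩
  · push_cast
    rw [← h, ← h']
    simp only [eisMul]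
    ring
  · simp [eisMul, Int.sub_emod, Int.mul_emod, *]
  · simp [eisMul, Int.add_emod, Int.mul_emod, *]

theorem eisConj_mem {n : ℕ} {u : ℤ × ℤ} (hu : u ∈ primaryReps n) :
    eisConj u ∈ primaryReps n := by
  obtain ⟨x, y⟩ := u
  obtain ⟨h, hx, hy⟩ := hu
  simp only at h hx hy
  refine ⟨?_, ?_, ?_⟩
  · rw [← h]
    simp only [eisConj]
    ring
  · simp only [eisConj]
    omega
  · simp only [eisConj]
    omega

theorem eisMul_eisMul_eisConj {p : ℕ} {v : ℤ × ℤ} (hv : v ∈ primaryReps p) (u : ℤ × ℤ) :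
    eisMul (eisMul u v) (eisConj v) = ((p : ℤ) * u.1, (p : ℤ) * u.2) := by
  obtain ⟨h, -, -⟩ := hv
  rw [← h]
  ext <;> simp only [eisMul, eisConj] <;> ring

theorem eisMul_eisConj_eisMul {p : ℕ} {v : ℤ × ℤ} (hv : v ∈ primaryReps p) (u : ℤ × ℤ) :
    eisMul (eisMul u (eisConj v)) v = ((p : ℤ) * u.1, (p : ℤ) * u.2) := by
  obtain ⟨h, -, -⟩ := hv
  rw [← h]
  ext <;> simp only [eisMul, eisConj] <;> ring

theorem eisMul_left_injective {p : ℕ} (hp : p ≠ 0) {v : ℤ × ℤ} (hv : v ∈ primaryReps p) :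
    Function.Injective fun u => eisMul u v := by
  intro u w huw
  have h := congrArg (fun z => eisMul z (eisConj v)) huw
  simp only [eisMul_eisMul_eisConj hv, Prod.mk.injEq] at h
  have hp' : (p : ℤ) ≠ 0 := by exact_mod_cast hp
  exact Prod.ext (mul_left_cancel₀ hp' h.1) (mul_left_cancel₀ hp' h.2)

/-- If `p ≡ 1` modulo `3`, dividing a primary representation by `p` keeps it primary. -/
theorem mem_primaryReps_of_mul_mem {p m : ℕ} (hp : p ≠ 0) (hp3 : p % 3 = 1) {w : ℤ × ℤ}
    (h : ((p : ℤ) * w.1, (p : ℤ) * w.2) ∈ primaryReps (p * p * m)) : w ∈ primaryReps m := by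
  obtain ⟨h, hx, hy⟩ := h
  simp only at h hx hy
  have hp' : (p : ℤ) ≠ 0 := by exact_mod_cast hp
  have hp3' : (p : ℤ) % 3 = 1 := by omega
  refine ⟨mul_left_cancel₀ (mul_ne_zero hp' hp') ?_, ?_, ?_⟩
  · push_cast at h
    linear_combination h
  · simpa [Int.mul_emod, hp3'] using hx
  · rw [Int.mul_emod, hp3'] at hy
    omega

/-- If a prime divides the norm and the second coordinate of an Eisenstein integer, it divides
the first coordinate. -/
theorem dvd_fst_of_dvd_snd {p : ℕ} (hp : p.Prime) {x y : ℤ} (hy : (p : ℤ) ∣ y)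
    (h : (p : ℤ) ∣ x ^ 2 + x * y + y ^ 2) : (p : ℤ) ∣ x := by
  refine (Nat.prime_iff_prime_int.mp hp).dvd_of_dvd_pow (n := 2) ?_
  have : x ^ 2 = (x ^ 2 + x * y + y ^ 2) - (x + y) * y := by ring
  rw [this]
  exact dvd_sub h (hy.mul_left _)

theorem mem_image_eisMul {p n : ℕ} (hp : p.Prime) (hp3 : p % 3 = 1) {v u : ℤ × ℤ}
    (hv : v ∈ primaryReps p) (hu : u ∈ primaryReps (p * n))
    (hd : (p : ℤ) ∣ (eisMul u (eisConj v)).2) :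
    u ∈ (fun w => eisMul w v) '' primaryReps n := by
  have hmem := eisMul_mem hu (eisConj_mem hv)
  have hd1 : (p : ℤ) ∣ (eisMul u (eisConj v)).1 := by
    refine dvd_fst_of_dvd_snd hp hd ?_
    rw [hmem.1]
    push_cast
    exact dvd_mul_left _ _
  obtain ⟨s, hs⟩ := hd1
  obtain ⟨t, ht⟩ := hd
  have heq : eisMul u (eisConj v) = ((p : ℤ) * s, (p : ℤ) * t) := Prod.ext hs ht
  refine ⟨(s, t), mem_primaryReps_of_mul_mem hp.ne_zero hp3 ?_, ?_⟩
  · rw [← heq]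
    convert hmem using 2
    ring
  · have h := eisMul_eisConj_eisMul hv u
    rw [heq] at h
    have hp' : (p : ℤ) ≠ 0 := by exact_mod_cast hp.ne_zero
    simp only [eisMul, Prod.mk.injEq] at h
    refine Prod.ext (mul_left_cancel₀ hp' ?_) (mul_left_cancel₀ hp' ?_)
    · rw [← h.1]
      simp only [eisMul]
      ring
    · rw [← h.2]
      simp only [eisMul]
      ring

theorem eisConj_eisConj (u : ℤ × ℤ) : eisConj (eisConj u) = u := by
  simp [eisConj]

theorem primaryReps_mul_eq_union {p n : ℕ} (hp : p.Prime) (hp3 : p % 3 = 1) {v : ℤ × ℤ}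
    (hv : v ∈ primaryReps p) :
    primaryReps (p * n) = (fun w => eisMul w v) '' primaryReps n ∪
      (fun w => eisMul w (eisConj v)) '' primaryReps n := by
  ext u
  constructor
  · intro hu
    have hprod : (p : ℤ) ∣ (eisMul u (eisConj v)).2 * (eisMul u (eisConj (eisConj v))).2 := by
      refine ⟨u.2 ^ 2 - v.2 ^ 2 * n, ?_⟩
      have h1 := hu.1
      have h2 := hv.1
      push_cast at h1
      simp only [eisConj_eisConj]
      simp only [eisMul, eisConj]
      linear_combination u.2 ^ 2 * h2 - v.2 ^ 2 * h1
    rcases (Nat.prime_iff_prime_int.mp hp).dvd_or_dvd hprod with h | h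
    · exact Or.inl (mem_image_eisMul hp hp3 hv hu h)
    · exact Or.inr (mem_image_eisMul hp hp3 (eisConj_mem hv) hu h)
  · rw [mul_comm p n]
    rintro (⟨w, hw, rfl⟩ | ⟨w, hw, rfl⟩)
    · exact eisMul_mem hw hv
    · exact eisMul_mem hw (eisConj_mem hv)

theorem dvd_of_mem_inter {p n : ℕ} (hp : p.Prime) (hp3 : p ≠ 3) {v u : ℤ × ℤ}
    (hv : v ∈ primaryReps p)
    (hu : u ∈ (fun w => eisMul w v) '' primaryReps n ∩
      (fun w => eisMul w (eisConj v)) '' primaryReps n) : (p : ℤ) ∣ u.1 ∧ (p : ℤ) ∣ u.2 := by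
  have hpz := Nat.prime_iff_prime_int.mp hp
  obtain ⟨⟨w, -, hw⟩, ⟨w', -, hw'⟩⟩ := hu
  have h1 := eisMul_eisMul_eisConj hv w
  have h2 := eisMul_eisConj_eisMul hv w'
  simp only at hw hw'
  rw [hw] at h1
  rw [hw'] at h2
  have hcop : ¬ (p : ℤ) ∣ 2 * v.1 + v.2 := by
    intro hd
    have h3 : (p : ℤ) ∣ 3 * v.2 ^ 2 := by
      have : 3 * v.2 ^ 2 = (p : ℤ) * 4 - (2 * v.1 + v.2) * (2 * v.1 + v.2) := by
        rw [← hv.1]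
        ring
      rw [this]
      exact dvd_sub (dvd_mul_right _ _) (hd.mul_right _)
    have hb : (p : ℤ) ∣ v.2 := by
      rcases hpz.dvd_or_dvd h3 with h | h
      · have : p ∣ 3 := by exact_mod_cast h
        exact absurd ((Nat.prime_dvd_prime_iff_eq hp Nat.prime_three).mp this) hp3
      · exact hpz.dvd_of_dvd_pow h
    have ha : (p : ℤ) ∣ v.1 := dvd_fst_of_dvd_snd hp hb (by rw [hv.1])
    obtain ⟨s, hs⟩ := ha
    obtain ⟨t, ht⟩ := hb
    have h := hv.1
    rw [hs, ht] at h
    have hp' : (p : ℤ) ≠ 0 := hpz.ne_zero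
    have : (p : ℤ) * (s ^ 2 + s * t + t ^ 2) = 1 := mul_left_cancel₀ hp' (by linear_combination h)
    exact hpz.not_isUnit (IsUnit.of_mul_eq_one _ this)
  simp only [eisMul, eisConj, Prod.mk.injEq] at h1 h2
  constructor
  · refine (hpz.dvd_or_dvd (b := 2 * v.1 + v.2) ⟨w.1 + w'.1, ?_⟩).resolve_right hcop
    linear_combination h1.1 + h2.1
  · refine (hpz.dvd_or_dvd (b := 2 * v.1 + v.2) ⟨w.2 + w'.2, ?_⟩).resolve_right hcop
    linear_combination h1.2 + h2.2

theorem dvd_of_dvd_coords {p n : ℕ} (hp : p ≠ 0) {u : ℤ × ℤ} (hu : u ∈ primaryReps (p * n))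
    (h1 : (p : ℤ) ∣ u.1) (h2 : (p : ℤ) ∣ u.2) : p ∣ n := by
  obtain ⟨s, hs⟩ := h1
  obtain ⟨t, ht⟩ := h2
  have h := hu.1
  rw [hs, ht] at h
  push_cast at h
  have hp' : (p : ℤ) ≠ 0 := by exact_mod_cast hp
  have : (n : ℤ) = p * (s ^ 2 + s * t + t ^ 2) := mul_left_cancel₀ hp' (by linear_combination -h)
  exact Int.natCast_dvd_natCast.mp ⟨_, this⟩

theorem ncard_inter {p n : ℕ} (hp : p.Prime) (hp3 : p % 3 = 1) {v : ℤ × ℤ}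
    (hv : v ∈ primaryReps p) :
    ((fun w => eisMul w v) '' primaryReps n ∩
      (fun w => eisMul w (eisConj v)) '' primaryReps n).ncard =
      if p ∣ n then (primaryReps (n / p)).ncard else 0 := by
  have hp' : (p : ℤ) ≠ 0 := by exact_mod_cast hp.ne_zero
  split_ifs with hpn
  · obtain ⟨m, rfl⟩ := hpn
    rw [Nat.mul_div_cancel_left _ hp.pos]
    rw [← Set.ncard_image_of_injective (primaryReps m)
      (f := fun w : ℤ × ℤ => ((p : ℤ) * w.1, (p : ℤ) * w.2))]
    · congr 1
      ext u
      constructor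
      · intro hu
        obtain ⟨⟨s, hs⟩, ⟨t, ht⟩⟩ := dvd_of_mem_inter hp (by omega) hv hu
        have heq : u = ((p : ℤ) * s, (p : ℤ) * t) := Prod.ext hs ht
        refine ⟨(s, t), mem_primaryReps_of_mul_mem hp.ne_zero hp3 ?_, heq.symm⟩
        rw [← heq, mul_assoc, primaryReps_mul_eq_union hp hp3 hv]
        exact Or.inl hu.1
      · rintro ⟨w, hw, rfl⟩
        refine ⟨⟨eisMul w (eisConj v), ?_, eisMul_eisConj_eisMul hv w⟩,
          ⟨eisMul w v, ?_, eisMul_eisMul_eisConj hv w⟩⟩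
        · rw [mul_comm]
          exact eisMul_mem hw (eisConj_mem hv)
        · rw [mul_comm]
          exact eisMul_mem hw hv
    · rintro ⟨a, b⟩ ⟨c, d⟩ h
      simpa [hp.ne_zero] using h
  · rw [Set.ncard_eq_zero ((primaryReps_finite n).image _ |>.inter_of_left _)]
    refine Set.eq_empty_of_forall_notMem fun u hu => hpn ?_
    obtain ⟨h1, h2⟩ := dvd_of_mem_inter hp (by omega) hv hu
    refine dvd_of_dvd_coords hp.ne_zero ?_ h1 h2
    rw [primaryReps_mul_eq_union hp hp3 hv]
    exact Or.inl hu.1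

theorem ncard_primaryReps_mul_of_split {p n : ℕ} (hp : p.Prime) (hp3 : p % 3 = 1) {v : ℤ × ℤ}
    (hv : v ∈ primaryReps p) :
    (primaryReps (p * n)).ncard + (if p ∣ n then (primaryReps (n / p)).ncard else 0) =
      2 * (primaryReps n).ncard := by
  rw [← ncard_inter hp hp3 hv, primaryReps_mul_eq_union hp hp3 hv,
    Set.ncard_union_add_ncard_inter _ _ ((primaryReps_finite n).image _)
      ((primaryReps_finite n).image _),
    Set.ncard_image_of_injective _ (eisMul_left_injective hp.ne_zero hv),
    Set.ncard_image_of_injective _ (eisMul_left_injective hp.ne_zero (eisConj_mem hv)), two_mul]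

/-- A prime `p ≡ 2` modulo `3` is inert: it divides `x² + xy + y²` only if it divides `x`
and `y`. -/
theorem dvd_of_inert {p : ℕ} (hp : p.Prime) (hp3 : p % 3 = 2) {x y : ℤ}
    (h : (p : ℤ) ∣ x ^ 2 + x * y + y ^ 2) : (p : ℤ) ∣ x ∧ (p : ℤ) ∣ y := by
  suffices hy : (p : ℤ) ∣ y from ⟨dvd_fst_of_dvd_snd hp hy h, hy⟩
  by_contra hy
  have := Fact.mk hp
  rw [← ZMod.intCast_zmod_eq_zero_iff_dvd] at h hy
  push_cast at h
  set t : ZMod p := x / y with ht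
  have hxt : (x : ZMod p) = t * y := by
    rw [ht]
    field_simp
  have hq : t ^ 2 + t + 1 = 0 := by
    refine (mul_eq_zero.mp (?_ : (y : ZMod p) ^ 2 * (t ^ 2 + t + 1) = 0)).resolve_left
      (pow_ne_zero 2 hy)
    rw [hxt] at h
    linear_combination h
  have ht3 : t ^ 3 = 1 := by linear_combination (t - 1) * hq
  have ht0 : t ≠ 0 := by
    rintro h0
    simp [h0] at hq
  have ht1 : t ≠ 1 := by
    intro h1
    rw [h1] at hq
    have h3 : ((3 : ℕ) : ZMod p) = 0 := by
      push_cast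
      linear_combination hq
    rw [ZMod.natCast_eq_zero_iff, Nat.prime_dvd_prime_iff_eq hp Nat.prime_three] at h3
    omega
  have hord : orderOf t = 3 := orderOf_eq_prime ht3 ht1
  have hdvd : 3 ∣ p - 1 := hord ▸ ZMod.orderOf_dvd_card_sub_one ht0
  omega

theorem ncard_primaryReps_mul_of_inert {p n : ℕ} (hp : p.Prime) (hp3 : p % 3 = 2) :
    (primaryReps (p * n)).ncard = if p ∣ n then (primaryReps (n / p)).ncard else 0 := by
  have hp' : (p : ℤ) ≠ 0 := by exact_mod_cast hp.ne_zero
  have hdvd : ∀ u ∈ primaryReps (p * n), (p : ℤ) ∣ u.1 ∧ (p : ℤ) ∣ u.2 := by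
    intro u hu
    refine dvd_of_inert hp hp3 ?_
    rw [hu.1]
    push_cast
    exact dvd_mul_right _ _
  have hp3' : (-p : ℤ) % 3 = 1 := by omega
  split_ifs with hpn
  · obtain ⟨m, rfl⟩ := hpn
    rw [Nat.mul_div_cancel_left _ hp.pos]
    rw [← Set.ncard_image_of_injective (primaryReps m)
      (f := fun w : ℤ × ℤ => ((-p : ℤ) * w.1, (-p : ℤ) * w.2))]
    · congr 1
      ext u
      constructor
      · intro hu
        obtain ⟨⟨s, hs⟩, ⟨t, ht⟩⟩ := hdvd u hu
        obtain ⟨h, hx, hy⟩ := hu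
        rw [hs, ht] at h
        rw [hs] at hx
        rw [ht] at hy
        refine ⟨(-s, -t), ⟨mul_left_cancel₀ (mul_ne_zero hp' hp') ?_, ?_, ?_⟩,
          Prod.ext (by simp [hs]) (by simp [ht])⟩
        · push_cast at h
          linear_combination h
        · rw [← neg_mul_neg, Int.mul_emod, hp3'] at hx
          simpa using hx
        · rw [← neg_mul_neg, Int.mul_emod, hp3'] at hy
          simp only
          omega
      · rintro ⟨w, ⟨h, hx, hy⟩, rfl⟩
        refine ⟨?_, ?_, ?_⟩
        · push_cast
          rw [← h]
          ring
        · simp only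
          rw [Int.mul_emod, hp3', hx]
          norm_num
        · simp only
          rw [Int.mul_emod, hp3', hy]
          norm_num
    · rintro ⟨a, b⟩ ⟨c, d⟩ h
      simpa [hp.ne_zero] using h
  · rw [Set.ncard_eq_zero (primaryReps_finite _)]
    exact Set.eq_empty_of_forall_notMem fun u hu =>
      hpn (dvd_of_dvd_coords hp.ne_zero hu (hdvd u hu).1 (hdvd u hu).2)

/-- Thue's lemma for a prime modulus. -/
theorem exists_small_of_prime {p : ℕ} (hp : p.Prime) (t : ZMod p) :
    ∃ x y : ℤ, (x ≠ 0 ∨ y ≠ 0) ∧ x ^ 2 < p ∧ y ^ 2 < p ∧ (x : ZMod p) = t * y := by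
  have := Fact.mk hp
  set k := Nat.sqrt p with hk
  have hcard : (Finset.univ : Finset (ZMod p)).card <
      (Finset.range (k + 1) ×ˢ Finset.range (k + 1)).card := by
    rw [Finset.card_univ, ZMod.card, Finset.card_product, Finset.card_range]
    exact Nat.lt_succ_sqrt p
  obtain ⟨⟨a, b⟩, hab, ⟨c, d⟩, hcd, hne, heq⟩ :=
    Finset.exists_ne_map_eq_of_card_lt_of_maps_to hcard
      (f := fun q : ℕ × ℕ => (q.1 : ZMod p) - t * q.2)
      (fun _ _ => Finset.mem_coe.mpr (Finset.mem_univ _))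
  simp only [Finset.mem_product, Finset.mem_range] at hab hcd
  have hk2 : k ^ 2 < p := by
    refine lt_of_le_of_ne (by rw [sq]; exact Nat.sqrt_le p) fun h => ?_
    exact (Nat.Prime.not_prime_pow le_rfl) (h ▸ hp)
  have hsmall : ∀ r s : ℕ, r < k + 1 → s < k + 1 → ((r : ℤ) - s) ^ 2 < p := by
    intro r s hr hs
    have h1 : ((r : ℤ) - s) ^ 2 ≤ (k : ℤ) ^ 2 := by
      refine sq_le_sq' ?_ ?_ <;> omega
    exact lt_of_le_of_lt h1 (by exact_mod_cast hk2)
  refine ⟨(a : ℤ) - c, (b : ℤ) - d, ?_, hsmall a c hab.1 hcd.1, hsmall b d hab.2 hcd.2, ?_⟩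
  · by_contra! h
    exact hne (Prod.ext (by simp only; omega) (by simp only; omega))
  · push_cast
    simp only at heq
    linear_combination heq

theorem exists_primitive_cube_root {p : ℕ} (hp : p.Prime) (hp3 : p % 3 = 1) :
    ∃ t : ZMod p, t ^ 2 + t + 1 = 0 := by
  have := Fact.mk hp
  have : Fact (Nat.Prime 3) := ⟨Nat.prime_three⟩
  have hcard : 3 ∣ Fintype.card (ZMod p)ˣ := by
    rw [ZMod.card_units_eq_totient, Nat.totient_prime hp]
    omega
  obtain ⟨u, hu⟩ := exists_prime_orderOf_dvd_card 3 hcard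
  refine ⟨u, ?_⟩
  have h3 : (u : ZMod p) ^ 3 = 1 := by
    rw [← Units.val_pow_eq_pow_val, ← hu, pow_orderOf_eq_one, Units.val_one]
  have h1 : (u : ZMod p) - 1 ≠ 0 := by
    intro h
    have : u = 1 := Units.ext (by simpa using sub_eq_zero.mp h)
    simp [this] at hu
  refine (mul_eq_zero.mp (?_ : ((u : ZMod p) - 1) * ((u : ZMod p) ^ 2 + u + 1) = 0)).resolve_left h1
  linear_combination h3

theorem exists_rep_of_split {p : ℕ} (hp : p.Prime) (hp3 : p % 3 = 1) :
    ∃ x y : ℤ, x ^ 2 + x * y + y ^ 2 = p := by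
  obtain ⟨t, ht⟩ := exists_primitive_cube_root hp hp3
  obtain ⟨x, y, hne, hx, hy, hxy⟩ := exists_small_of_prime hp t
  refine ⟨x, y, ?_⟩
  have hdvd : (p : ℤ) ∣ x ^ 2 + x * y + y ^ 2 := by
    rw [← ZMod.intCast_zmod_eq_zero_iff_dvd]
    push_cast
    rw [hxy]
    linear_combination (y : ZMod p) ^ 2 * ht
  obtain ⟨k, hk⟩ := hdvd
  have hp0 : (0 : ℤ) < p := by exact_mod_cast hp.pos
  have hpos : 0 < x ^ 2 + x * y + y ^ 2 := by
    rcases hne with h | h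
    · nlinarith [sq_nonneg (x + 2 * y), sq_pos_of_ne_zero h]
    · nlinarith [sq_nonneg (2 * x + y), sq_pos_of_ne_zero h]
  have hk0 : 0 < k := by
    rw [hk] at hpos
    exact pos_of_mul_pos_right hpos hp0.le
  have hk3 : k < 3 := by
    have : (p : ℤ) * k < p * 3 := by nlinarith [sq_nonneg (x - y)]
    exact lt_of_mul_lt_mul_left this hp0.le
  obtain rfl | rfl : k = 1 ∨ k = 2 := by omega
  · linarith
  · exfalso
    obtain ⟨⟨s, rfl⟩, ⟨r, rfl⟩⟩ := dvd_of_inert Nat.prime_two (by norm_num) (x := x) (y := y)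
      ⟨p, by push_cast; linarith⟩
    push_cast at hk
    have h2 : (p : ℤ) = 2 * (s ^ 2 + s * r + r ^ 2) := by linarith
    have h2' : 2 ∣ p := Int.natCast_dvd_natCast.mp ⟨_, h2⟩
    rw [Nat.prime_dvd_prime_iff_eq Nat.prime_two hp] at h2'
    omega

/-- Every Eisenstein integer of norm `≡ 1` modulo `3` has a primary associate. -/
theorem primaryReps_nonempty_of_rep {n : ℕ} (hn : n % 3 = 1) {x y : ℤ}
    (h : x ^ 2 + x * y + y ^ 2 = n) : (primaryReps n).Nonempty := by
  have hmod : (x ^ 2 + x * y + y ^ 2) % 3 = 1 := by omega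
  have hx : x % 3 = 0 ∨ x % 3 = 1 ∨ x % 3 = 2 := by omega
  have hy : y % 3 = 0 ∨ y % 3 = 1 ∨ y % 3 = 2 := by omega
  rcases hx with hx | hx | hx <;> rcases hy with hy | hy | hy <;>
    simp [pow_two, Int.add_emod, Int.mul_emod, hx, hy] at hmod
  · exact ⟨(x + y, -x), by rw [← h]; ring, by simp only; omega, by simp only; omega⟩
  · exact ⟨(-x - y, x), by rw [← h]; ring, by simp only; omega, by simp only; omega⟩
  · exact ⟨(x, y), h, by simp only; omega, by simp only; omega⟩
  · exact ⟨(-y, x + y), by rw [← h]; ring, by simp only; omega, by simp only; omega⟩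
  · exact ⟨(-x, -y), by rw [← h]; ring, by simp only; omega, by simp only; omega⟩
  · exact ⟨(y, -x - y), by rw [← h]; ring, by simp only; omega, by simp only; omega⟩

theorem chiM3_mul (a b : ℕ) : chiM3 (a * b) = chiM3 a * chiM3 b := by
  have ha : a % 3 = 0 ∨ a % 3 = 1 ∨ a % 3 = 2 := by omega
  have hb : b % 3 = 0 ∨ b % 3 = 1 ∨ b % 3 = 2 := by omega
  rcases ha with ha | ha | ha <;> rcases hb with hb | hb | hb <;>
    simp [chiM3, Nat.mul_mod, ha, hb]

theorem sum_filter_dvd_divisors {χ : ℕ → ℤ} (hχ : ∀ a b, χ (a * b) = χ a * χ b) {p : ℕ}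
    (hp : 0 < p) (n : ℕ) (hn : n ≠ 0) :
    ∑ d ∈ n.divisors with p ∣ d, χ d = χ p * Sdiv χ n p := by
  unfold Sdiv
  split_ifs with hpn
  · obtain ⟨m, rfl⟩ := hpn
    rw [Nat.mul_div_cancel_left _ hp, Finset.mul_sum]
    symm
    refine Finset.sum_bij (fun d _ => p * d) ?_ ?_ ?_ ?_
    · intro d hd
      simp only [Finset.mem_filter, Nat.mem_divisors] at hd ⊢
      exact ⟨⟨Nat.mul_dvd_mul_left p hd.1, hn⟩, dvd_mul_right _ _⟩
    · intro a _ b _ h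
      exact Nat.eq_of_mul_eq_mul_left hp h
    · intro d hd
      simp only [Finset.mem_filter, Nat.mem_divisors] at hd
      obtain ⟨⟨h1, -⟩, e, rfl⟩ := hd
      exact ⟨e, Nat.mem_divisors.mpr ⟨Nat.dvd_of_mul_dvd_mul_left hp h1,
        right_ne_zero_of_mul hn⟩, rfl⟩
    · intro d _
      exact (hχ p d).symm
  · rw [mul_zero]
    refine Finset.sum_eq_zero fun d hd => ?_
    simp only [Finset.mem_filter, Nat.mem_divisors] at hd
    exact absurd (hd.2.trans hd.1.1) hpn

/-- The Hecke relation at a prime `p` for the divisor sum of a completely multiplicative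
function. -/
theorem sum_divisors_prime_mul {χ : ℕ → ℤ} (hχ : ∀ a b, χ (a * b) = χ a * χ b) {p : ℕ}
    (hp : p.Prime) {n : ℕ} (hn : n ≠ 0) :
    ∑ d ∈ (p * n).divisors, χ d =
      (1 + χ p) * ∑ d ∈ n.divisors, χ d - χ p * Sdiv χ n p := by
  have h1 := Finset.sum_filter_add_sum_filter_not (p * n).divisors (p ∣ ·) χ
  have h2 := Finset.sum_filter_add_sum_filter_not n.divisors (p ∣ ·) χ
  rw [sum_filter_dvd_divisors hχ hp.pos _ (mul_ne_zero hp.ne_zero hn)] at h1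
  rw [sum_filter_dvd_divisors hχ hp.pos _ hn] at h2
  have h3 : Sdiv χ (p * n) p = ∑ d ∈ n.divisors, χ d := by
    rw [Sdiv, if_pos (dvd_mul_right _ _), Nat.mul_div_cancel_left _ hp.pos]
  have h4 : (p * n).divisors.filter (fun d => ¬ p ∣ d) = n.divisors.filter (fun d => ¬ p ∣ d) := by
    ext d
    simp only [Finset.mem_filter, Nat.mem_divisors]
    constructor
    · rintro ⟨⟨h, -⟩, hd⟩
      exact ⟨⟨((Nat.Prime.coprime_iff_not_dvd hp).mpr hd).symm.dvd_of_dvd_mul_left h, hn⟩, hd⟩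
    · rintro ⟨⟨h, -⟩, hd⟩
      exact ⟨⟨h.mul_left p, mul_ne_zero hp.ne_zero hn⟩, hd⟩
  rw [h4, h3] at h1
  linear_combination h2 - h1

theorem ncard_primaryReps_eq_sum_divisors (n : ℕ) (hn : ¬ 3 ∣ n) :
    ((primaryReps n).ncard : ℤ) = ∑ d ∈ n.divisors, chiM3 d := by
  induction n using Nat.strong_induction_on with
  | _ n ih =>
    by_cases h1 : n = 1
    · subst h1
      simp [primaryReps_one, chiM3]
    obtain ⟨p, hp, m, rfl⟩ := Nat.exists_prime_and_dvd h1
    have hm0 : m ≠ 0 := by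
      rintro rfl
      simp at hn
    have hm3 : ¬ 3 ∣ m := fun h => hn (h.mul_left p)
    have hp3 : ¬ 3 ∣ p := fun h => hn (h.mul_right m)
    have hlt : m < p * m := lt_mul_left (Nat.pos_of_ne_zero hm0) hp.one_lt
    have hdiv : (((if p ∣ m then (primaryReps (m / p)).ncard else 0 : ℕ)) : ℤ) =
        Sdiv chiM3 m p := by
      unfold Sdiv
      split_ifs with hpm
      · obtain ⟨k, rfl⟩ := hpm
        rw [Nat.mul_div_cancel_left _ hp.pos]
        exact ih k (lt_of_le_of_lt (Nat.le_mul_of_pos_left k hp.pos) hlt)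
          fun h => hm3 (h.mul_left p)
      · rfl
    rw [sum_divisors_prime_mul chiM3_mul hp hm0, ← ih m hlt hm3, ← hdiv]
    obtain h | h : p % 3 = 1 ∨ p % 3 = 2 := by omega
    · obtain ⟨x, y, hxy⟩ := exists_rep_of_split hp h
      obtain ⟨v, hv⟩ := primaryReps_nonempty_of_rep h hxy
      have := ncard_primaryReps_mul_of_split (n := m) hp h hv
      have hχ : chiM3 p = 1 := by simp [chiM3, h]
      rw [hχ]
      omega
    · have hχ : chiM3 p = -1 := by simp [chiM3, h]
      rw [hχ, ncard_primaryReps_mul_of_inert hp h]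
      ring

theorem rep_x2_xy_y2_x1mod3_y0mod3 (n : ℕ) (hn : 0 < n) :
    ({p : ℤ × ℤ | p.1 ^ 2 + p.1 * p.2 + p.2 ^ 2 = (n : ℤ) ∧ p.1 % 3 = 1 ∧ p.2 % 3 = 0}.ncard : ℤ) =
      Sdiv chiM3 n 1 - Sdiv chiM3 n 3 := by
  change ((primaryReps n).ncard : ℤ) = _
  have hone : Sdiv chiM3 n 1 = ∑ d ∈ n.divisors, chiM3 d := by simp [Sdiv]
  rw [hone]
  by_cases h3 : 3 ∣ n
  · obtain ⟨m, rfl⟩ := h3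
    have hχ : chiM3 3 = 0 := by simp [chiM3]
    rw [primaryReps_eq_empty (dvd_mul_right 3 m),
      sum_divisors_prime_mul chiM3_mul Nat.prime_three (by omega), hχ]
    simp [Sdiv]
  · rw [ncard_primaryReps_eq_sum_divisors n h3, Sdiv, if_neg h3, sub_zero]
end

section
/- For every positive integer n, the number of pairs (x, y) ∈ ℤ² with x² + 2y² = n, x ≡ 1 (mod 2), and y ≡ 0 (mod 2) equals ∑_{d|n} χ₋₈(d) − ∑_{d|(n/2)} χ₋₈(d) + ∑_{d|n} χ₋₄(n/d) χ₈(d). -/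
open Finset

/-- The Kronecker symbol `(-8/d)` for positive `d`. -/
def chiM8 (d : ℕ) : ℤ :=
  if d % 8 = 1 ∨ d % 8 = 3 then 1 else if d % 8 = 5 ∨ d % 8 = 7 then -1 else 0

/-- The Kronecker symbol `(8/d)` for positive `d`. -/
def chi8 (d : ℕ) : ℤ :=
  if d % 8 = 1 ∨ d % 8 = 7 then 1 else if d % 8 = 3 ∨ d % 8 = 5 then -1 else 0

/-- The Kronecker symbol `(-4/d)` for positive `d`. -/
def chiM4 (d : ℕ) : ℤ := if d % 4 = 1 then 1 else if d % 4 = 3 then -1 else 0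

/-- `chiM8` is completely multiplicative. -/
lemma chiM8_mul (a b : ℕ) : chiM8 (a * b) = chiM8 a * chiM8 b := by
  have ha : a % 8 < 8 := Nat.mod_lt _ (by norm_num)
  have hb : b % 8 < 8 := Nat.mod_lt _ (by norm_num)
  unfold chiM8
  rw [Nat.mul_mod]
  generalize a % 8 = r at *
  generalize b % 8 = s at *
  interval_cases r <;> interval_cases s <;> rfl

/-- The divisor sum of the character `chiM8`. -/
def divisorSumChiM8 (n : ℕ) : ℤ := ∑ d ∈ n.divisors, chiM8 d

lemma sum_image_prime_mul_chiM8 {p : ℕ} (hp : p.Prime) (s : Finset ℕ) :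
    ∑ d ∈ s.image (p * ·), chiM8 d = chiM8 p * ∑ d ∈ s, chiM8 d := by
  rw [Finset.sum_image (fun a _ b _ h => Nat.eq_of_mul_eq_mul_left hp.pos h), Finset.mul_sum]
  exact Finset.sum_congr rfl fun d _ => chiM8_mul p d

lemma divisors_prime_mul {p k : ℕ} (hp : p.Prime) (hk : k ≠ 0) :
    (p * k).divisors = k.divisors ∪ k.divisors.image (p * ·) := by
  ext d
  simp only [Nat.mem_divisors, Finset.mem_union, Finset.mem_image, mul_ne_zero_iff]
  constructor
  · rintro ⟨h, -⟩
    by_cases hd : p ∣ d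
    · obtain ⟨e, rfl⟩ := hd
      exact Or.inr ⟨e, ⟨Nat.dvd_of_mul_dvd_mul_left hp.pos h, hk⟩, rfl⟩
    · exact Or.inl ⟨((hp.coprime_iff_not_dvd.2 hd).symm).dvd_of_dvd_mul_left h, hk⟩
  · rintro (⟨h, -⟩ | ⟨e, ⟨h, -⟩, rfl⟩)
    · exact ⟨h.mul_left p, hp.ne_zero, hk⟩
    · exact ⟨Nat.mul_dvd_mul_left p h, hp.ne_zero, hk⟩

lemma divisorSumChiM8_prime_mul_of_not_dvd {p k : ℕ} (hp : p.Prime) (hk : k ≠ 0)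
    (hpk : ¬ p ∣ k) :
    divisorSumChiM8 (p * k) = (1 + chiM8 p) * divisorSumChiM8 k := by
  have hd : Disjoint k.divisors (k.divisors.image (p * ·)) := by
    rw [Finset.disjoint_left]
    intro d hd hd'
    obtain ⟨e, -, rfl⟩ := Finset.mem_image.1 hd'
    exact hpk ((dvd_mul_right p e).trans (Nat.dvd_of_mem_divisors hd))
  unfold divisorSumChiM8
  rw [divisors_prime_mul hp hk, Finset.sum_union hd, sum_image_prime_mul_chiM8 hp]
  ring

lemma divisorSumChiM8_prime_mul_prime_mul {p m : ℕ} (hp : p.Prime) (hm : m ≠ 0) :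
    divisorSumChiM8 (p * (p * m)) =
      (1 + chiM8 p) * divisorSumChiM8 (p * m) - chiM8 p * divisorSumChiM8 m := by
  have hpm : p * m ≠ 0 := mul_ne_zero hp.ne_zero hm
  have hi : (p * m).divisors ∩ (p * m).divisors.image (p * ·) = m.divisors.image (p * ·) := by
    ext d
    simp only [Finset.mem_inter, Finset.mem_image, Nat.mem_divisors]
    constructor
    · rintro ⟨⟨h, -⟩, e, -, rfl⟩
      exact ⟨e, ⟨Nat.dvd_of_mul_dvd_mul_left hp.pos h, hm⟩, rfl⟩
    · rintro ⟨e, ⟨h, -⟩, rfl⟩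
      exact ⟨⟨Nat.mul_dvd_mul_left p h, hpm⟩, e, ⟨h.mul_left p, hpm⟩, rfl⟩
  have key := Finset.sum_union_inter (s₁ := (p * m).divisors)
    (s₂ := (p * m).divisors.image (p * ·)) (f := chiM8)
  rw [hi, ← divisors_prime_mul hp hpm, sum_image_prime_mul_chiM8 hp,
    sum_image_prime_mul_chiM8 hp] at key
  unfold divisorSumChiM8
  linarith

/-- The set of representations of `n` by the form `x² + 2y²`. -/
def normReps (n : ℕ) : Set (ℤ × ℤ) := {q | q.1 ^ 2 + 2 * q.2 ^ 2 = (n : ℤ)}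

lemma normReps_finite (n : ℕ) : (normReps n).Finite := by
  refine ((Set.finite_Icc (-(n : ℤ)) n).prod (Set.finite_Icc (-(n : ℤ)) n)).subset ?_
  rintro ⟨x, y⟩ h
  simp only [normReps, Set.mem_ofPred_eq] at h
  simp only [Set.mem_prod, Set.mem_Icc]
  have hx : x ^ 2 ≤ n := by nlinarith [sq_nonneg y]
  have hy : y ^ 2 ≤ n := by nlinarith [sq_nonneg x, sq_nonneg y]
  refine ⟨⟨?_, ?_⟩, ?_, ?_⟩ <;> nlinarith

lemma normReps_one_ncard : (normReps 1).ncard = 2 := by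
  have : normReps 1 = {((1 : ℤ), (0 : ℤ)), (-1, 0)} := by
    ext ⟨x, y⟩
    simp only [normReps, Set.mem_ofPred_eq, Set.mem_insert_iff, Set.mem_singleton_iff,
      Prod.mk.injEq, Nat.cast_one]
    constructor
    · intro h
      have hy : y = 0 := by
        by_contra hy
        have : 0 < y ^ 2 := by positivity
        nlinarith [sq_nonneg x]
      subst hy
      have : x ^ 2 = 1 := by linarith
      rcases sq_eq_one_iff.1 this with h | h <;> simp [h]
    · rintro (⟨rfl, rfl⟩ | ⟨rfl, rfl⟩) <;> norm_num
  rw [this, Set.ncard_pair (by decide)]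

/-- Thue's argument: a prime modulo which `-2` is a square has the form `a² + 2b²`. -/
lemma exists_sq_add_two_sq_of_isSquare {p : ℕ} (hp : p.Prime) (h : IsSquare (-2 : ZMod p)) :
    ∃ a b : ℤ, a ^ 2 + 2 * b ^ 2 = p := by
  have : Fact p.Prime := ⟨hp⟩
  obtain ⟨z, hz⟩ := h
  set k := Nat.sqrt p
  have hcard : Fintype.card (ZMod p) < Fintype.card (Fin (k + 1) × Fin (k + 1)) := by
    simpa [ZMod.card] using Nat.lt_succ_sqrt p
  obtain ⟨s, t, hst, heq⟩ := Fintype.exists_ne_map_eq_of_card_lt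
    (fun q : Fin (k + 1) × Fin (k + 1) => ((q.1 : ℕ) : ZMod p) - z * ((q.2 : ℕ) : ZMod p)) hcard
  obtain ⟨x, hx⟩ : ∃ x : ℤ, x = (s.1 : ℕ) - (t.1 : ℕ) := ⟨_, rfl⟩
  obtain ⟨y, hy⟩ : ∃ y : ℤ, y = (s.2 : ℕ) - (t.2 : ℕ) := ⟨_, rfl⟩
  have hxy : (x : ZMod p) = z * y := by
    simp only [hx, hy]
    push_cast
    linear_combination heq
  have hdvd : (p : ℤ) ∣ x ^ 2 + 2 * y ^ 2 := by
    rw [← ZMod.intCast_zmod_eq_zero_iff_dvd]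
    push_cast
    rw [hxy]
    linear_combination (-(y : ZMod p) ^ 2) * hz
  have hk : (k : ℤ) * k < p := by
    have h1 : k * k ≤ p := Nat.sqrt_le p
    have h2 : k * k ≠ p := fun h => Nat.prime_mul_iff.not.2
      (by rintro (⟨h3, h4⟩ | ⟨h3, h4⟩) <;> simp [h4] at h3 ⊢ <;> exact Nat.not_prime_one h3)
      (h ▸ hp)
    exact_mod_cast lt_of_le_of_ne h1 h2
  have hs1 := s.1.2
  have hs2 := s.2.2
  have ht1 := t.1.2
  have ht2 := t.2.2
  have hx2 : x ^ 2 < p := by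
    have : -(k : ℤ) ≤ x := by omega
    have : x ≤ k := by omega
    nlinarith
  have hy2 : y ^ 2 < p := by
    have : -(k : ℤ) ≤ y := by omega
    have : y ≤ k := by omega
    nlinarith
  have hpos : 0 < x ^ 2 + 2 * y ^ 2 := by
    by_contra hle
    have hx0 : x = 0 := by nlinarith [sq_nonneg x, sq_nonneg y]
    have hy0 : y = 0 := by nlinarith [sq_nonneg x, sq_nonneg y]
    exact hst (Prod.ext (Fin.ext (by omega)) (Fin.ext (by omega)))
  obtain ⟨c, hc⟩ := hdvd
  have hp0 : (0 : ℤ) < p := by exact_mod_cast hp.pos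
  have hc0 : 0 < c := by
    by_contra hn
    nlinarith
  have hc3 : c < 3 := by
    by_contra hn
    nlinarith
  obtain rfl | rfl : c = 1 ∨ c = 2 := by omega
  · exact ⟨x, y, by linarith⟩
  · obtain ⟨w, rfl⟩ : (2 : ℤ) ∣ x :=
      Int.prime_two.dvd_of_dvd_pow (n := 2) ⟨p - y ^ 2, by linarith⟩
    exact ⟨y, w, by nlinarith⟩

/-- Multiplication by `a + b√-2` in coordinates. -/
def normMul (a b : ℤ) (q : ℤ × ℤ) : ℤ × ℤ := (a * q.1 - 2 * b * q.2, a * q.2 + b * q.1)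

lemma normMul_injective {a b : ℤ} {p : ℕ} (hp : p.Prime) (hab : a ^ 2 + 2 * b ^ 2 = p) :
    Function.Injective (normMul a b) := by
  rintro ⟨u, v⟩ ⟨u', v'⟩ h
  simp only [normMul, Prod.mk.injEq] at h
  have hp0 : (p : ℤ) ≠ 0 := by exact_mod_cast hp.ne_zero
  obtain ⟨h1, h2⟩ := h
  refine Prod.ext (mul_left_cancel₀ hp0 ?_) (mul_left_cancel₀ hp0 ?_)
  · simp only [← hab]
    linear_combination a * h1 + 2 * b * h2
  · simp only [← hab]
    linear_combination a * h2 - b * h1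

lemma mem_normMul_image_iff {a b x y : ℤ} {p k : ℕ} (hp : p.Prime)
    (hab : a ^ 2 + 2 * b ^ 2 = p) (h : x ^ 2 + 2 * y ^ 2 = ((p * k : ℕ) : ℤ)) :
    (x, y) ∈ normMul a b '' normReps k ↔ (p : ℤ) ∣ a * y - b * x := by
  have hp0 : (p : ℤ) ≠ 0 := by exact_mod_cast hp.ne_zero
  push_cast at h
  constructor
  · rintro ⟨⟨u, v⟩, -, huv⟩
    simp only [normMul, Prod.mk.injEq] at huv
    obtain ⟨rfl, rfl⟩ := huv
    exact ⟨v, by rw [← hab]; ring⟩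
  · rintro ⟨v, hv⟩
    have h1 : (p : ℤ) ∣ a * x + 2 * b * y := by
      refine (Nat.prime_iff_prime_int.1 hp).dvd_of_dvd_pow (n := 2) ⟨p * k - 2 * p * v ^ 2, ?_⟩
      linear_combination p * h + (x ^ 2 + 2 * y ^ 2) * hab - 2 * (a * y - b * x + p * v) * hv
    obtain ⟨u, hu⟩ := h1
    have hx : x = a * u - 2 * b * v := by
      refine mul_left_cancel₀ hp0 ?_
      linear_combination a * hu - 2 * b * hv - x * hab
    have hy : y = a * v + b * u := by
      refine mul_left_cancel₀ hp0 ?_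
      linear_combination a * hv + b * hu - y * hab
    refine ⟨(u, v), ?_, by simp [normMul, hx, hy]⟩
    refine mul_left_cancel₀ hp0 ?_
    rw [← h, hx, hy, ← hab]
    ring

lemma normMul_mem {a b : ℤ} {p k : ℕ} (hab : a ^ 2 + 2 * b ^ 2 = p) {q : ℤ × ℤ}
    (hq : q ∈ normReps k) : normMul a b q ∈ normReps (p * k) := by
  simp only [normReps, Set.mem_ofPred_eq, normMul] at hq ⊢
  push_cast
  rw [← hq, ← hab]
  ring

lemma normReps_prime_mul {a b : ℤ} {p k : ℕ} (hp : p.Prime) (hab : a ^ 2 + 2 * b ^ 2 = p) :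
    normReps (p * k) = normMul a b '' normReps k ∪ normMul a (-b) '' normReps k := by
  have hab' : a ^ 2 + 2 * (-b) ^ 2 = p := by rw [neg_sq, hab]
  refine Set.Subset.antisymm ?_ ?_
  · rintro ⟨x, y⟩ h
    rw [Set.mem_union, mem_normMul_image_iff hp hab h, mem_normMul_image_iff hp hab' h]
    refine (Nat.prime_iff_prime_int.1 hp).dvd_or_dvd ⟨y ^ 2 - b ^ 2 * k, ?_⟩
    simp only [normReps, Set.mem_ofPred_eq, Nat.cast_mul] at h
    linear_combination y ^ 2 * hab - b ^ 2 * h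
  · rintro q (⟨r, hr, rfl⟩ | ⟨r, hr, rfl⟩)
    · exact normMul_mem hab hr
    · exact normMul_mem hab' hr

/-- Representations of `p * k` with both coordinates divisible by `p` come from `k = p * m`. -/
lemma exists_of_dvd_of_dvd {p k : ℕ} {x y : ℤ} (hp : p.Prime)
    (h : (x, y) ∈ normReps (p * k)) (hx : (p : ℤ) ∣ x) (hy : (p : ℤ) ∣ y) :
    ∃ m : ℕ, k = p * m ∧ (x, y) ∈ normMul p 0 '' normReps m := by
  have hp0 : (p : ℤ) ≠ 0 := by exact_mod_cast hp.ne_zero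
  obtain ⟨u, rfl⟩ := hx
  obtain ⟨v, rfl⟩ := hy
  simp only [normReps, Set.mem_ofPred_eq, Nat.cast_mul] at h
  have hk : (k : ℤ) = p * (u ^ 2 + 2 * v ^ 2) :=
    mul_left_cancel₀ hp0 (by linear_combination -h)
  have hm : (((u ^ 2 + 2 * v ^ 2).toNat : ℕ) : ℤ) = u ^ 2 + 2 * v ^ 2 :=
    Int.toNat_of_nonneg (by positivity)
  refine ⟨(u ^ 2 + 2 * v ^ 2).toNat, ?_, (u, v), Set.mem_ofPred.2 hm.symm, by simp [normMul]⟩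
  rw [← hm] at hk
  exact_mod_cast hk

lemma normMul_prime_mem {p m : ℕ} {q : ℤ × ℤ} (hq : q ∈ normReps m) :
    normMul p 0 q ∈ normReps (p * (p * m)) := by
  simp only [normReps, Set.mem_ofPred_eq, normMul] at hq ⊢
  push_cast
  rw [← hq]
  ring

lemma normMul_prime_injective {p : ℕ} (hp : p.Prime) : Function.Injective (normMul p 0) := by
  rintro ⟨u, v⟩ ⟨u', v'⟩ h
  simpa [normMul, hp.ne_zero] using h

lemma dvd_of_mem_inter_s12 {a b x y : ℤ} {p k : ℕ} (hp : p.Prime) (hp2 : p ≠ 2)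
    (hab : a ^ 2 + 2 * b ^ 2 = p) (h : (x, y) ∈ normReps (p * k))
    (h1 : (x, y) ∈ normMul a b '' normReps k) (h2 : (x, y) ∈ normMul a (-b) '' normReps k) :
    (p : ℤ) ∣ x ∧ (p : ℤ) ∣ y := by
  have hP := Nat.prime_iff_prime_int.1 hp
  have hab' : a ^ 2 + 2 * (-b) ^ 2 = p := by rw [neg_sq, hab]
  rw [mem_normMul_image_iff hp hab h] at h1
  rw [mem_normMul_image_iff hp hab' h] at h2
  have hn2 : ¬ (p : ℤ) ∣ 2 := fun hd =>
    hp2 ((Nat.prime_dvd_prime_iff_eq hp Nat.prime_two).1 (by exact_mod_cast hd))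
  have hnot : ¬ ((p : ℤ) ∣ a ∧ (p : ℤ) ∣ b) := by
    rintro ⟨⟨c, rfl⟩, d, rfl⟩
    refine hP.not_dvd_one ⟨c ^ 2 + 2 * d ^ 2, mul_left_cancel₀ hP.ne_zero ?_⟩
    linear_combination -hab
  have hb_of_a : (p : ℤ) ∣ a → (p : ℤ) ∣ b := by
    rintro ⟨c, rfl⟩
    have : (p : ℤ) ∣ 2 * b ^ 2 := ⟨1 - p * c ^ 2, by linear_combination hab⟩
    exact hP.dvd_of_dvd_pow ((hP.dvd_or_dvd this).resolve_left hn2)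
  have ha_of_b : (p : ℤ) ∣ b → (p : ℤ) ∣ a := by
    rintro ⟨c, rfl⟩
    exact hP.dvd_of_dvd_pow (n := 2) ⟨1 - 2 * p * c ^ 2, by linear_combination hab⟩
  have hay : (p : ℤ) ∣ 2 * (a * y) := by
    have := dvd_add h1 h2
    ring_nf at this ⊢
    exact this
  have hbx : (p : ℤ) ∣ 2 * (b * x) := by
    have := dvd_sub h2 h1
    ring_nf at this ⊢
    exact this
  have hay' := hP.dvd_or_dvd ((hP.dvd_or_dvd hay).resolve_left hn2)
  have hbx' := hP.dvd_or_dvd ((hP.dvd_or_dvd hbx).resolve_left hn2)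
  tauto

lemma normMul_prime_mem_image {a b : ℤ} {p m : ℕ} (hp : p.Prime)
    (hab : a ^ 2 + 2 * b ^ 2 = p) {q : ℤ × ℤ} (hq : q ∈ normReps m) :
    normMul p 0 q ∈ normMul a b '' normReps (p * m) := by
  have h := normMul_prime_mem (p := p) hq
  rw [show normMul p 0 q = ((normMul p 0 q).1, (normMul p 0 q).2) from rfl,
    mem_normMul_image_iff hp hab h]
  exact ⟨a * q.2 - b * q.1, by simp only [normMul]; ring⟩

/-- An odd prime modulo which `-2` is not a square divides both coordinates. -/
lemma dvd_of_not_isSquare {p k : ℕ} (hp : p.Prime) (hs : ¬ IsSquare (-2 : ZMod p)) {x y : ℤ}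
    (h : (x, y) ∈ normReps (p * k)) : (p : ℤ) ∣ x ∧ (p : ℤ) ∣ y := by
  have : Fact p.Prime := ⟨hp⟩
  have h0 : (x : ZMod p) ^ 2 + 2 * (y : ZMod p) ^ 2 = 0 := by
    have := congrArg (Int.cast : ℤ → ZMod p) (show x ^ 2 + 2 * y ^ 2 = ((p * k : ℕ) : ℤ) from h)
    push_cast at this
    simpa using this
  have hy : (y : ZMod p) = 0 := by
    by_contra hy
    refine hs ⟨x / y, ?_⟩
    field_simp
    linear_combination -h0
  have hx : (x : ZMod p) = 0 := by simpa [hy] using h0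
  exact ⟨(ZMod.intCast_zmod_eq_zero_iff_dvd x p).1 hx, (ZMod.intCast_zmod_eq_zero_iff_dvd y p).1 hy⟩

lemma chiM8_prime {p : ℕ} (hp : p.Prime) (hp2 : p ≠ 2) :
    (IsSquare (-2 : ZMod p) ∧ chiM8 p = 1) ∨ (¬ IsSquare (-2 : ZMod p) ∧ chiM8 p = -1) := by
  have : Fact p.Prime := ⟨hp⟩
  rw [ZMod.exists_sq_eq_neg_two_iff hp2]
  have := hp.eq_two_or_odd
  unfold chiM8
  split_ifs <;> simp <;> omega

lemma normReps_ncard_prime_mul_of_not_dvd {p k : ℕ} (hp : p.Prime) (hp2 : p ≠ 2)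
    (hpk : ¬ p ∣ k) :
    ((normReps (p * k)).ncard : ℤ) = (1 + chiM8 p) * (normReps k).ncard := by
  rcases chiM8_prime hp hp2 with ⟨hs, hc⟩ | ⟨hs, hc⟩
  · obtain ⟨a, b, hab⟩ := exists_sq_add_two_sq_of_isSquare hp hs
    have hab' : a ^ 2 + 2 * (-b) ^ 2 = p := by rw [neg_sq, hab]
    have hd : Disjoint (normMul a b '' normReps k) (normMul a (-b) '' normReps k) := by
      rw [Set.disjoint_left]
      rintro ⟨x, y⟩ h1 h2
      have h : (x, y) ∈ normReps (p * k) := by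
        rw [normReps_prime_mul hp hab]
        exact Or.inl h1
      obtain ⟨hx, hy⟩ := dvd_of_mem_inter_s12 hp hp2 hab h h1 h2
      obtain ⟨m, rfl, -⟩ := exists_of_dvd_of_dvd hp h hx hy
      exact hpk (dvd_mul_right p m)
    rw [normReps_prime_mul hp hab, Set.ncard_union_eq hd ((normReps_finite k).image _)
      ((normReps_finite k).image _), Set.ncard_image_of_injective _ (normMul_injective hp hab),
      Set.ncard_image_of_injective _ (normMul_injective hp hab'), hc]
    push_cast
    ring
  · have : normReps (p * k) = ∅ := by
      rw [Set.eq_empty_iff_forall_notMem]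
      rintro ⟨x, y⟩ h
      obtain ⟨hx, hy⟩ := dvd_of_not_isSquare hp hs h
      obtain ⟨m, rfl, -⟩ := exists_of_dvd_of_dvd hp h hx hy
      exact hpk (dvd_mul_right p m)
    simp [this, hc]

lemma normReps_ncard_prime_mul_prime_mul {p m : ℕ} (hp : p.Prime) (hp2 : p ≠ 2) :
    ((normReps (p * (p * m))).ncard : ℤ) =
      (1 + chiM8 p) * (normReps (p * m)).ncard - chiM8 p * (normReps m).ncard := by
  have hcancel : ∀ m' : ℕ, p * m = p * m' → m' = m :=
    fun m' h => (Nat.eq_of_mul_eq_mul_left hp.pos h).symm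
  rcases chiM8_prime hp hp2 with ⟨hs, hc⟩ | ⟨hs, hc⟩
  · obtain ⟨a, b, hab⟩ := exists_sq_add_two_sq_of_isSquare hp hs
    have hab' : a ^ 2 + 2 * (-b) ^ 2 = p := by rw [neg_sq, hab]
    have hi : normMul a b '' normReps (p * m) ∩ normMul a (-b) '' normReps (p * m) =
        normMul p 0 '' normReps m := by
      refine Set.Subset.antisymm ?_ ?_
      · rintro ⟨x, y⟩ ⟨h1, h2⟩
        have h : (x, y) ∈ normReps (p * (p * m)) := by
          rw [normReps_prime_mul hp hab]
          exact Or.inl h1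
        obtain ⟨hx, hy⟩ := dvd_of_mem_inter_s12 hp hp2 hab h h1 h2
        obtain ⟨m', hm', hmem⟩ := exists_of_dvd_of_dvd hp h hx hy
        rwa [hcancel m' hm'] at hmem
      · rintro _ ⟨q, hq, rfl⟩
        exact ⟨normMul_prime_mem_image hp hab hq, normMul_prime_mem_image hp hab' hq⟩
    have key := Set.ncard_union_add_ncard_inter (normMul a b '' normReps (p * m))
      (normMul a (-b) '' normReps (p * m)) ((normReps_finite _).image _)
      ((normReps_finite _).image _)
    rw [← normReps_prime_mul hp hab, hi,
      Set.ncard_image_of_injective _ (normMul_prime_injective hp),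
      Set.ncard_image_of_injective _ (normMul_injective hp hab),
      Set.ncard_image_of_injective _ (normMul_injective hp hab')] at key
    rw [hc]
    omega
  · have : normReps (p * (p * m)) = normMul p 0 '' normReps m := by
      refine Set.Subset.antisymm ?_ ?_
      · rintro ⟨x, y⟩ h
        obtain ⟨hx, hy⟩ := dvd_of_not_isSquare hp hs h
        obtain ⟨m', hm', hmem⟩ := exists_of_dvd_of_dvd hp h hx hy
        rwa [hcancel m' hm'] at hmem
      · rintro _ ⟨q, hq, rfl⟩
        exact normMul_prime_mem hq
    rw [this, Set.ncard_image_of_injective _ (normMul_prime_injective hp), hc]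
    ring

/-- The number of representations of an odd `n` by `x² + 2y²` is `2 ∑_{d ∣ n} χ₋₈(d)`. -/
lemma normReps_ncard_of_odd (n : ℕ) (hn : Odd n) :
    ((normReps n).ncard : ℤ) = 2 * divisorSumChiM8 n := by
  induction n using Nat.strong_induction_on with
  | _ n ih =>
  by_cases h1 : n = 1
  · subst h1
    rw [normReps_one_ncard]
    simp [divisorSumChiM8, chiM8]
  obtain ⟨p, hp, k, rfl⟩ := Nat.exists_prime_and_dvd h1
  obtain ⟨hpo, hko⟩ := Nat.odd_mul.1 hn
  have hp2 : p ≠ 2 := by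
    rintro rfl
    exact absurd hpo (by decide)
  have hlt : k < p * k := lt_mul_of_one_lt_left hko.pos hp.one_lt
  by_cases hpk : p ∣ k
  · obtain ⟨m, rfl⟩ := hpk
    have hmo := (Nat.odd_mul.1 hko).2
    have hlt' : m < p * m := lt_mul_of_one_lt_left hmo.pos hp.one_lt
    rw [normReps_ncard_prime_mul_prime_mul hp hp2,
      divisorSumChiM8_prime_mul_prime_mul hp hmo.pos.ne', ih _ hlt hko,
      ih _ (hlt'.trans hlt) hmo]
    ring
  · rw [normReps_ncard_prime_mul_of_not_dvd hp hp2 hpk,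
      divisorSumChiM8_prime_mul_of_not_dvd hp hko.pos.ne' hpk, ih _ hlt hko]
    ring

lemma chiM4_mul_chi8_of_odd {e d : ℕ} (h : Odd (e * d)) :
    chiM4 e * chi8 d = chiM4 (e * d) * chiM8 d := by
  obtain ⟨he, hd⟩ := Nat.odd_mul.1 h
  have he8 : e % 4 = 1 ∨ e % 4 = 3 := by have := Nat.odd_iff.1 he; omega
  have hd8 : d % 8 = 1 ∨ d % 8 = 3 ∨ d % 8 = 5 ∨ d % 8 = 7 := by
    have := Nat.odd_iff.1 hd
    omega
  have hd4 : d % 4 = d % 8 % 4 := by omega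
  unfold chiM4 chi8 chiM8
  rw [Nat.mul_mod, hd4]
  rcases he8 with h1 | h1 <;> rcases hd8 with h2 | h2 | h2 | h2 <;> simp [h1, h2]

lemma sum_chiM4_mul_chi8_of_odd {n : ℕ} (hn : Odd n) :
    ∑ d ∈ n.divisors, chiM4 (n / d) * chi8 d = chiM4 n * divisorSumChiM8 n := by
  rw [divisorSumChiM8, Finset.mul_sum]
  refine Finset.sum_congr rfl fun d hd => ?_
  have h : n / d * d = n := Nat.div_mul_cancel (Nat.dvd_of_mem_divisors hd)
  rw [chiM4_mul_chi8_of_odd (by rwa [h]), h]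

lemma sum_chiM4_mul_chi8_of_even {n : ℕ} (hn : Even n) :
    ∑ d ∈ n.divisors, chiM4 (n / d) * chi8 d = 0 := by
  refine Finset.sum_eq_zero fun d hd => ?_
  have h : n / d * d = n := Nat.div_mul_cancel (Nat.dvd_of_mem_divisors hd)
  rw [← h, Nat.even_mul, Nat.even_iff, Nat.even_iff] at hn
  rw [mul_eq_zero]
  refine hn.imp (fun h => ?_) (fun h => ?_)
  · unfold chiM4
    rw [if_neg (by omega), if_neg (by omega)]
  · unfold chi8
    rw [if_neg (by omega), if_neg (by omega)]

lemma divisorSumChiM8_two_mul {k : ℕ} (hk : k ≠ 0) :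
    divisorSumChiM8 (2 * k) = divisorSumChiM8 k := by
  have h2 : chiM8 2 = 0 := rfl
  by_cases h : 2 ∣ k
  · obtain ⟨m, rfl⟩ := h
    rw [divisorSumChiM8_prime_mul_prime_mul Nat.prime_two (by omega), h2]
    ring
  · rw [divisorSumChiM8_prime_mul_of_not_dvd Nat.prime_two hk h, h2]
    ring

lemma sq_emod_eight_of_odd {x : ℤ} (hx : x % 2 = 1) : x ^ 2 % 8 = 1 := by
  have h : x % 8 = 1 ∨ x % 8 = 3 ∨ x % 8 = 5 ∨ x % 8 = 7 := by omega
  rcases h with h | h | h | h <;> simp [pow_two, Int.mul_emod, h]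

/-- Representations with odd `x` and even `y` only exist for `n ≡ 1 (mod 8)`. -/
lemma emod_eight_of_rep {n : ℕ} {x y : ℤ} (h : x ^ 2 + 2 * y ^ 2 = (n : ℤ)) (hx : x % 2 = 1)
    (hy : y % 2 = 0) : n % 8 = 1 := by
  have h1 := sq_emod_eight_of_odd hx
  obtain ⟨w, rfl⟩ := Int.dvd_of_emod_eq_zero hy
  have h2 : 2 * (2 * w) ^ 2 = 8 * w ^ 2 := by ring
  omega

lemma rep_parity {n : ℕ} (hn : n % 8 = 1) {x y : ℤ} (h : x ^ 2 + 2 * y ^ 2 = (n : ℤ)) :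
    x % 2 = 1 ∧ y % 2 = 0 := by
  have hx : x % 2 = 1 := by
    rcases Int.emod_two_eq_zero_or_one x with hx | hx
    · obtain ⟨w, rfl⟩ := Int.dvd_of_emod_eq_zero hx
      have : (2 * w) ^ 2 = 2 * (2 * w ^ 2) := by ring
      omega
    · exact hx
  refine ⟨hx, ?_⟩
  have h1 := sq_emod_eight_of_odd hx
  rcases Int.emod_two_eq_zero_or_one y with hy | hy
  · exact hy
  · have h2 := sq_emod_eight_of_odd hy
    omega

lemma normReps_eq_empty_of_emod_eight {n : ℕ} (hn : n % 8 = 5) : normReps n = ∅ := by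
  rw [Set.eq_empty_iff_forall_notMem]
  rintro ⟨x, y⟩ h
  simp only [normReps, Set.mem_ofPred_eq] at h
  rcases Int.emod_two_eq_zero_or_one x with hx | hx
  · obtain ⟨w, rfl⟩ := Int.dvd_of_emod_eq_zero hx
    have : (2 * w) ^ 2 = 2 * (2 * w ^ 2) := by ring
    omega
  · have h1 := sq_emod_eight_of_odd hx
    rcases Int.emod_two_eq_zero_or_one y with hy | hy
    · have := emod_eight_of_rep h hx hy
      omega
    · have h2 := sq_emod_eight_of_odd hy
      omega

theorem rep_x2_2y2_x1mod2_y0mod2 (n : ℕ) (hn : 0 < n) :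
    ({p : ℤ × ℤ | p.1 ^ 2 + 2 * p.2 ^ 2 = (n : ℤ) ∧ p.1 % 2 = 1 ∧ p.2 % 2 = 0}.ncard : ℤ) =
      Sdiv chiM8 n 1 - Sdiv chiM8 n 2 + ∑ d ∈ n.divisors, chiM4 (n / d) * chi8 d := by
  have hS1 : Sdiv chiM8 n 1 = divisorSumChiM8 n := by simp [Sdiv, divisorSumChiM8]
  have hempty : n % 8 ≠ 1 →
      {p : ℤ × ℤ | p.1 ^ 2 + 2 * p.2 ^ 2 = (n : ℤ) ∧ p.1 % 2 = 1 ∧ p.2 % 2 = 0} = ∅ := by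
    intro h
    rw [Set.eq_empty_iff_forall_notMem]
    rintro ⟨x, y⟩ ⟨h1, hx, hy⟩
    exact h (emod_eight_of_rep h1 hx hy)
  rw [hS1]
  rcases Nat.even_or_odd n with he | ho
  · have hmod := Nat.even_iff.1 he
    rw [sum_chiM4_mul_chi8_of_even he, hempty (by omega)]
    obtain ⟨k, rfl⟩ := he.two_dvd
    have hS2 : Sdiv chiM8 (2 * k) 2 = divisorSumChiM8 k := by simp [Sdiv, divisorSumChiM8]
    rw [hS2, divisorSumChiM8_two_mul (by omega)]
    simp
  · have hmod := Nat.odd_iff.1 ho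
    have hS2 : Sdiv chiM8 n 2 = 0 := if_neg (by omega)
    have hR := normReps_ncard_of_odd n ho
    rw [sum_chiM4_mul_chi8_of_odd ho, hS2]
    by_cases h1 : n % 8 = 1
    · have hset : {p : ℤ × ℤ | p.1 ^ 2 + 2 * p.2 ^ 2 = (n : ℤ) ∧ p.1 % 2 = 1 ∧ p.2 % 2 = 0} =
          normReps n := by
        ext ⟨x, y⟩
        exact ⟨fun h => h.1, fun h => ⟨h, rep_parity h1 h⟩⟩
      have hc : chiM4 n = 1 := if_pos (by omega)
      rw [hset, hR, hc]
      ring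
    · rw [hempty h1]
      by_cases h5 : n % 8 = 5
      · rw [normReps_eq_empty_of_emod_eight h5] at hR
        have h0 : divisorSumChiM8 n = 0 := by simpa using hR
        simp [h0]
      · have hc : chiM4 n = -1 := by
          unfold chiM4
          rw [if_neg (by omega), if_pos (by omega)]
        rw [hc]
        simp
end

section
/- For every positive integer n, the number of pairs (x, y) ∈ ℤ² with x² + xy + 2y² = n, x ≡ 1 (mod 2), and y ≡ 0 (mod 2) equals 2 ∑_{d|n} χ₋₇(d) − 4 ∑_{d|(n/2)} χ₋₇(d) + 2 ∑_{d|(n/4)} χ₋₇(d). -/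
open Finset

/-- The Kronecker symbol `(-7/d)` for positive `d`. -/
def chiM7 (d : ℕ) : ℤ :=
  if d % 7 = 1 ∨ d % 7 = 2 ∨ d % 7 = 4 then 1 else if d % 7 = 0 then 0 else -1

theorem chiM7_mod (d : ℕ) : chiM7 d = chiM7 (d % 7) := by
  simp [chiM7]

theorem chiM7_mul (a b : ℕ) : chiM7 (a * b) = chiM7 a * chiM7 b := by
  rw [chiM7_mod, Nat.mul_mod, chiM7_mod a, chiM7_mod b]
  have table : ∀ i < 7, ∀ j < 7, chiM7 (i * j % 7) = chiM7 i * chiM7 j := by decide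
  exact table _ (Nat.mod_lt _ (by norm_num)) _ (Nat.mod_lt _ (by norm_num))

theorem divisors_prime_mul_s14 {p m : ℕ} (hp : p.Prime) (hm : m ≠ 0) :
    (p * m).divisors = m.divisors ∪ m.divisors.image (p * ·) := by
  ext d
  simp only [Nat.mem_divisors, mem_union, mem_image, ne_eq, mul_eq_zero, hp.ne_zero, hm, or_self,
    not_false_eq_true, and_true]
  constructor
  · intro h
    by_cases hpd : p ∣ d
    · obtain ⟨e, rfl⟩ := hpd
      exact .inr ⟨e, Nat.dvd_of_mul_dvd_mul_left hp.pos h, rfl⟩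
    · exact .inl (((hp.coprime_iff_not_dvd.2 hpd).symm).dvd_of_dvd_mul_left h)
  · rintro (h | ⟨e, he, rfl⟩)
    · exact h.mul_left p
    · exact mul_dvd_mul_left p he

theorem sum_image_prime_mul {p : ℕ} (hp : p.Prime) (s : Finset ℕ) :
    ∑ d ∈ s.image (p * ·), chiM7 d = chiM7 p * ∑ d ∈ s, chiM7 d := by
  rw [sum_image fun _ _ _ _ h => Nat.eq_of_mul_eq_mul_left hp.pos h, mul_sum]
  simp only [chiM7_mul]

theorem sum_divisors_prime_mul_s14 {p m : ℕ} (hp : p.Prime) (hm : m ≠ 0) (hpm : ¬ p ∣ m) :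
    ∑ d ∈ (p * m).divisors, chiM7 d = (1 + chiM7 p) * ∑ d ∈ m.divisors, chiM7 d := by
  rw [divisors_prime_mul_s14 hp hm, sum_union, sum_image_prime_mul hp]
  · ring
  · rw [disjoint_left]
    intro d hd hd'
    obtain ⟨e, -, rfl⟩ := mem_image.1 hd'
    exact hpm ((dvd_mul_right p e).trans (Nat.dvd_of_mem_divisors hd))

theorem sum_divisors_prime_mul_mul {p m : ℕ} (hp : p.Prime) (hm : m ≠ 0) :
    ∑ d ∈ (p * (p * m)).divisors, chiM7 d + chiM7 p * ∑ d ∈ m.divisors, chiM7 d =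
      (1 + chiM7 p) * ∑ d ∈ (p * m).divisors, chiM7 d := by
  have hpm : p * m ≠ 0 := mul_ne_zero hp.ne_zero hm
  have inter : (p * m).divisors ∩ (p * m).divisors.image (p * ·) = m.divisors.image (p * ·) := by
    ext d
    simp only [mem_inter, mem_image, Nat.mem_divisors]
    constructor
    · rintro ⟨⟨h, -⟩, e, -, rfl⟩
      exact ⟨e, ⟨Nat.dvd_of_mul_dvd_mul_left hp.pos h, hm⟩, rfl⟩
    · rintro ⟨e, ⟨he, -⟩, rfl⟩
      exact ⟨⟨mul_dvd_mul_left p he, hpm⟩, e, ⟨he.mul_left p, hpm⟩, rfl⟩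
  have key := sum_union_inter (s₁ := (p * m).divisors) (s₂ := (p * m).divisors.image (p * ·))
    (f := chiM7)
  rw [inter, ← divisors_prime_mul_s14 hp hpm, sum_image_prime_mul hp, sum_image_prime_mul hp] at key
  linarith

theorem legendreSym_neg_seven {p : ℕ} [Fact p.Prime] (hp : p ≠ 2) :
    legendreSym p (-7) = chiM7 p := by
  have hodd : Odd p := (Fact.out : p.Prime).odd_of_ne_two hp
  have table : ∀ r < 28, r % 2 = 1 → jacobiSym (-7) r = chiM7 (r % 7) := by
    intro r hr h
    interval_cases r <;> simp at h <;> norm_num [chiM7]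
  rw [jacobiSym.legendreSym.to_jacobiSym, jacobiSym.mod_right _ hodd, chiM7_mod]
  have := Nat.odd_iff.1 hodd
  change jacobiSym (-7) (p % 28) = _
  rw [table _ (Nat.mod_lt _ (by norm_num)) (by omega)]
  congr 1
  omega

/-- A form of Thue's lemma: every residue `t` modulo a prime `p` is a quotient of two small integers. -/
theorem exists_small_quotient {p : ℕ} (hp : p.Prime) (t : ℤ) :
    ∃ x y : ℤ, 0 < y ∧ x ^ 2 < p ∧ y ^ 2 < p ∧ (p : ℤ) ∣ x - y * t := by
  have hs : 0 < p.sqrt := Nat.sqrt_pos.2 hp.pos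
  obtain ⟨j, k, hk, hks, h⟩ := Real.exists_int_int_abs_mul_sub_le ((t : ℝ) / p) hs
  have hp0 : (0 : ℝ) < p := by exact_mod_cast hp.pos
  have sqrt_sq : (p.sqrt : ℤ) ^ 2 < p := by
    have hle : p.sqrt ^ 2 ≤ p := Nat.sqrt_le' p
    have hne : p.sqrt ^ 2 ≠ p := fun e => hp.prime.not_isSquare ⟨p.sqrt, by rw [← sq, e]⟩
    exact_mod_cast lt_of_le_of_ne hle hne
  have hlt : (p : ℝ) < (p.sqrt + 1) * (p.sqrt + 1) := by exact_mod_cast Nat.lt_succ_sqrt p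
  have hx : |k * t - j * p| < (p.sqrt : ℤ) + 1 := by
    have e : ((k * t - j * p : ℤ) : ℝ) = p * (k * (t / p) - j) := by
      push_cast
      field_simp
    have : |((k * t - j * p : ℤ) : ℝ)| < p.sqrt + 1 := by
      rw [e, abs_mul, abs_of_pos hp0]
      calc (p : ℝ) * |(k : ℝ) * (t / p) - j| ≤ p * (1 / (p.sqrt + 1)) := by gcongr
        _ < p.sqrt + 1 := by
          rw [mul_one_div, div_lt_iff₀ (by positivity)]
          exact hlt
    exact_mod_cast this
  refine ⟨k * t - j * p, k, hk, ?_, ?_, -j, by ring⟩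
  · refine lt_of_le_of_lt ?_ sqrt_sq
    rw [← sq_abs]
    exact pow_le_pow_left₀ (abs_nonneg _) (by omega) 2
  · exact lt_of_le_of_lt (pow_le_pow_left₀ hk.le hks 2) sqrt_sq

theorem even_even_of_sq_add_seven_mul_sq {x y m : ℤ} (h : x ^ 2 + 7 * y ^ 2 = 2 * m)
    (hm : ¬ 4 ∣ m) : 2 ∣ x ∧ 2 ∣ y := by
  rcases Int.even_or_odd' x with ⟨a, rfl | rfl⟩ <;> rcases Int.even_or_odd' y with ⟨b, rfl | rfl⟩
  · simp
  · ring_nf at h; omega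
  · ring_nf at h; omega
  · obtain ⟨c, hc⟩ := Int.even_mul_succ_self a
    obtain ⟨d, hd⟩ := Int.even_mul_succ_self b
    exact absurd ⟨c + 7 * d + 1, by linarith⟩ hm

theorem dvd_dvd_of_chiM7_eq_neg_one {q : ℕ} [Fact q.Prime] (hq : q ≠ 2)
    (hχ : chiM7 q = -1) {x y : ℤ} (h : (q : ℤ) ∣ x ^ 2 + 7 * y ^ 2) : (q : ℤ) ∣ x ∧ (q : ℤ) ∣ y :=
  legendreSym.prime_dvd_of_eq_neg_one ((legendreSym_neg_seven hq).trans hχ)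
    (by convert h using 1; ring)

/-- A prime `p` cannot satisfy `x² + 7y² = q p` for an odd prime `q ≠ p` inert in `ℚ(√-7)`. -/
theorem sq_add_seven_mul_sq_ne_inert_mul {p q : ℕ} [Fact q.Prime] (hp : p.Prime) (hq : q ≠ 2)
    (hχ : chiM7 q = -1) (hpq : p ≠ q) (x y : ℤ) : x ^ 2 + 7 * y ^ 2 ≠ q * p := by
  intro h
  obtain ⟨⟨a, rfl⟩, ⟨b, rfl⟩⟩ := dvd_dvd_of_chiM7_eq_neg_one hq hχ ⟨p, h⟩
  have hq0 : (q : ℤ) ≠ 0 := by exact_mod_cast (Fact.out : q.Prime).ne_zero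
  have : (q : ℤ) ∣ p := ⟨a ^ 2 + 7 * b ^ 2, mul_left_cancel₀ hq0 (by rw [← h]; ring)⟩
  exact hpq ((Nat.prime_dvd_prime_iff_eq Fact.out hp).1 (by exact_mod_cast this)).symm

theorem exists_sq_add_seven_mul_sq {p : ℕ} (hp : p.Prime) (h2 : p ≠ 2) (hχ : chiM7 p = 1) :
    ∃ a b : ℤ, a ^ 2 + 7 * b ^ 2 = p := by
  have : Fact p.Prime := ⟨hp⟩
  have hodd : p % 2 = 1 := Nat.odd_iff.1 (hp.odd_of_ne_two h2)
  have hleg : legendreSym p (-7) = 1 := (legendreSym_neg_seven h2).trans hχ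
  have h0 : ((-7 : ℤ) : ZMod p) ≠ 0 := fun h => by
    rw [(legendreSym.eq_zero_iff p _).2 h] at hleg
    exact zero_ne_one hleg
  obtain ⟨r, hr⟩ := (legendreSym.eq_one_iff p h0).1 hleg
  obtain ⟨t, rfl⟩ := ZMod.intCast_surjective r
  have ht : (p : ℤ) ∣ t ^ 2 + 7 := by
    rw [← ZMod.intCast_zmod_eq_zero_iff_dvd]
    push_cast at hr ⊢
    linear_combination -hr
  obtain ⟨x, y, hy, hxp, hyp, u, hu⟩ := exists_small_quotient hp t
  obtain ⟨v, hv⟩ := ht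
  have hx : x = y * t + p * u := by linarith
  obtain ⟨c, hc⟩ : (p : ℤ) ∣ x ^ 2 + 7 * y ^ 2 :=
    ⟨2 * y * t * u + p * u ^ 2 + y ^ 2 * v, by rw [hx]; linear_combination y ^ 2 * hv⟩
  have hp0 : (0 : ℤ) < p := by exact_mod_cast hp.pos
  have hc0 : 0 < c := by
    by_contra! hneg
    nlinarith [sq_nonneg x, mul_pos hy hy]
  have hc8 : c < 8 := by
    by_contra! hbig
    nlinarith
  have : Fact (Nat.Prime 5) := ⟨by norm_num⟩
  have hne3 : p ≠ 3 := by rintro rfl; revert hχ; decide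
  have hne5 : p ≠ 5 := by rintro rfl; revert hχ; decide
  interval_cases c
  · exact ⟨x, y, by linarith⟩
  · obtain ⟨⟨a, rfl⟩, ⟨b, rfl⟩⟩ :=
      even_even_of_sq_add_seven_mul_sq (x := x) (y := y) (m := p) (by linarith) (by omega)
    ring_nf at hc
    omega
  · exact absurd (hc.trans (mul_comm _ _))
      (sq_add_seven_mul_sq_ne_inert_mul (q := 3) hp (by norm_num) (by decide) hne3 x y)
  · obtain ⟨⟨a, rfl⟩, ⟨b, rfl⟩⟩ :=
      even_even_of_sq_add_seven_mul_sq (x := x) (y := y) (m := 2 * p) (by linarith) (by omega)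
    exact ⟨a, b, by linarith⟩
  · exact absurd (hc.trans (mul_comm _ _))
      (sq_add_seven_mul_sq_ne_inert_mul (q := 5) hp (by norm_num) (by decide) hne5 x y)
  · obtain ⟨⟨a, rfl⟩, ⟨b, rfl⟩⟩ :=
      even_even_of_sq_add_seven_mul_sq (x := x) (y := y) (m := 3 * p) (by linarith) (by omega)
    ring_nf at hc
    omega
  · have h7 : (7 : ℤ) ∣ x ^ 2 := ⟨p - y ^ 2, by linarith⟩
    obtain ⟨a, rfl⟩ := (Int.prime_iff_natAbs_prime.2 (by norm_num)).dvd_of_dvd_pow h7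
    exact ⟨y, a, by linarith⟩

/-- The elements of `ℤ[√-7]` of norm `n`. -/
def normFiber (n : ℕ) : Set (ℤ√(-7)) := {z | z.norm = n}

theorem mem_normFiber {n : ℕ} {z : ℤ√(-7)} :
    z ∈ normFiber n ↔ z.re ^ 2 + 7 * z.im ^ 2 = n := by
  change z.norm = n ↔ _
  rw [Zsqrtd.norm_def]
  constructor <;> intro h <;> linarith

theorem normFiber_finite (n : ℕ) : (normFiber n).Finite := by
  refine (((Set.finite_Icc (-(n : ℤ)) n).prod (Set.finite_Icc (-(n : ℤ)) n)).image
    fun q => (⟨q.1, q.2⟩ : ℤ√(-7))).subset fun z hz => ⟨(z.re, z.im), ?_, rfl⟩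
  rw [mem_normFiber] at hz
  simp only [Set.mem_prod, Set.mem_Icc]
  refine ⟨abs_le.1 (abs_le_of_sq_le_sq ?_ (by positivity)),
    abs_le.1 (abs_le_of_sq_le_sq ?_ (by positivity))⟩ <;>
  nlinarith [sq_nonneg z.re, sq_nonneg z.im, sq_nonneg ((n : ℤ) - 1), Int.natCast_nonneg n,
    Int.le_self_sq (n : ℤ)]

theorem mul_left_injective_of_norm_ne_zero {π : ℤ√(-7)} (hπ : π.norm ≠ 0) :
    Function.Injective (π * ·) := by
  intro z w h
  have : (π * (z - w)).norm = 0 := by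
    rw [mul_sub, sub_eq_zero.2 h, Zsqrtd.norm_zero]
  rw [Zsqrtd.norm_mul, mul_eq_zero, or_iff_right hπ,
    Zsqrtd.norm_eq_zero_iff (by norm_num)] at this
  exact sub_eq_zero.1 this

theorem ncard_image_mul_normFiber {π : ℤ√(-7)} (hπ : π.norm ≠ 0) (n : ℕ) :
    ((π * ·) '' normFiber n).ncard = (normFiber n).ncard :=
  Set.ncard_image_of_injective _ (mul_left_injective_of_norm_ne_zero hπ)

/-- The multiples of `π` among the elements of norm `N(π) m`. -/
theorem image_mul_normFiber {π : ℤ√(-7)} {k : ℕ} (hk : k ≠ 0) (hπ : π.norm = k) (m : ℕ) :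
    (π * ·) '' normFiber m = normFiber (k * m) ∩ {z | π ∣ z} := by
  have hk' : (k : ℤ) ≠ 0 := by exact_mod_cast hk
  ext z
  constructor
  · rintro ⟨w, hw, rfl⟩
    refine ⟨?_, dvd_mul_right _ _⟩
    change (π * w).norm = _
    rw [Zsqrtd.norm_mul, hπ, show w.norm = m from hw, Nat.cast_mul]
  · rintro ⟨hz, w, rfl⟩
    refine ⟨w, mul_left_cancel₀ hk' ?_, rfl⟩
    change (π * w).norm = _ at hz
    rwa [Zsqrtd.norm_mul, hπ, Nat.cast_mul] at hz

theorem ncard_normFiber_of_forall_dvd {π : ℤ√(-7)} {k : ℕ} (hk : k ≠ 0) (hπ : π.norm = k) (m : ℕ)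
    (h : ∀ z ∈ normFiber (k * m), π ∣ z) :
    (normFiber (k * m)).ncard = (normFiber m).ncard := by
  have hinter : normFiber (k * m) ∩ {z | π ∣ z} = normFiber (k * m) := Set.inter_eq_left.2 h
  rw [← hinter, ← image_mul_normFiber hk hπ,
    ncard_image_mul_normFiber (by rw [hπ]; exact_mod_cast hk)]

theorem ncard_normFiber_one : (normFiber 1).ncard = 2 := by
  have : normFiber 1 = {1, -1} := by
    ext z
    rw [mem_normFiber]
    constructor
    · intro h
      have him : z.im = 0 := by
        by_contra hne
        have : 0 < z.im ^ 2 := by positivity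
        push_cast at h
        nlinarith [sq_nonneg z.re]
      have hre : z.re ^ 2 = 1 := by simpa [him] using h
      rcases sq_eq_sq_iff_eq_or_eq_neg.1 (hre.trans (one_pow 2).symm) with h1 | h1 <;> simp [Zsqrtd.ext_iff, him, h1]
    · rintro (rfl | rfl) <;> simp
  rw [this, Set.ncard_pair]
  decide

theorem ncard_normFiber_seven_mul (m : ℕ) : (normFiber (7 * m)).ncard = (normFiber m).ncard := by
  refine ncard_normFiber_of_forall_dvd (π := ⟨0, 1⟩) (by norm_num) (by simp [Zsqrtd.norm_def]) m
    fun z hz => ?_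
  rw [mem_normFiber] at hz
  push_cast at hz
  have h7 : (7 : ℤ) ∣ z.re ^ 2 := ⟨m - z.im ^ 2, by linarith⟩
  obtain ⟨a, ha⟩ := (Int.prime_iff_natAbs_prime.2 (by norm_num)).dvd_of_dvd_pow h7
  exact ⟨⟨z.im, -a⟩, by ext <;> simp [ha]⟩

theorem natCast_dvd_of_inert {p : ℕ} (hp : p.Prime) (h2 : p ≠ 2) (hχ : chiM7 p = -1) {m : ℕ}
    {z : ℤ√(-7)} (hz : z ∈ normFiber (p * m)) : (p : ℤ√(-7)) ∣ z := by
  have : Fact p.Prime := ⟨hp⟩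
  rw [mem_normFiber] at hz
  have := dvd_dvd_of_chiM7_eq_neg_one h2 hχ (x := z.re) (y := z.im) ⟨m, by simpa using hz⟩
  exact_mod_cast (Zsqrtd.intCast_dvd (p : ℤ) z).2 this

theorem dvd_of_natCast_dvd {p m : ℕ} (hp : p.Prime) {z : ℤ√(-7)} (hz : z ∈ normFiber (p * m))
    (h : (p : ℤ√(-7)) ∣ z) : p ∣ m := by
  obtain ⟨w, rfl⟩ := h
  have hz' : ((p : ℤ√(-7)) * w).norm = ((p * m : ℕ) : ℤ) := hz
  rw [Zsqrtd.norm_mul, Zsqrtd.norm_natCast, Nat.cast_mul, mul_assoc] at hz'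
  have := mul_left_cancel₀ (by exact_mod_cast hp.ne_zero) hz'
  exact Int.natCast_dvd_natCast.1 ⟨_, this.symm⟩

/-- An element whose norm is divisible by the prime `p = N(π)` is divisible by `π` or `star π`. -/
theorem dvd_or_star_dvd {p : ℕ} (hp : p.Prime) {π : ℤ√(-7)} (hπ : π ∈ normFiber p) {m : ℕ}
    {z : ℤ√(-7)} (hz : z ∈ normFiber (p * m)) : π ∣ z ∨ star π ∣ z := by
  have hpZ : Prime (p : ℤ) := Nat.prime_iff_prime_int.1 hp
  have key : ∀ π : ℤ√(-7), π ∈ normFiber p → (p : ℤ) ∣ π.re * z.im - π.im * z.re → π ∣ z := by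
    intro π hπ hd
    have hN : π.norm = p := hπ
    rw [mem_normFiber] at hz hπ
    push_cast at hz
    have hre : (p : ℤ) ∣ π.re * z.re + 7 * π.im * z.im := by
      refine hpZ.dvd_of_dvd_pow (n := 2) ?_
      obtain ⟨e, he⟩ := hd
      refine ⟨p * m - 7 * p * e ^ 2, ?_⟩
      linear_combination (π.re ^ 2 + 7 * π.im ^ 2) * hz + p * m * hπ
        - 7 * (π.re * z.im - π.im * z.re + p * e) * he
    have : ((p : ℤ) : ℤ√(-7)) ∣ star π * z := by
      rw [Zsqrtd.intCast_dvd]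
      constructor
      · convert hre using 1
        simp
      · convert hd using 1
        simp
        ring
    obtain ⟨w, hw⟩ := this
    refine ⟨w, mul_left_injective_of_norm_ne_zero (π := star π) ?_ ?_⟩
    · rw [Zsqrtd.norm_conj, hN]
      exact_mod_cast hp.ne_zero
    · change star π * z = star π * (π * w)
      rw [hw, ← hN, Zsqrtd.norm_eq_mul_conj]
      ring
  have hprod : (p : ℤ) ∣ (π.re * z.im - π.im * z.re) * (π.re * z.im + π.im * z.re) := by
    have hz := mem_normFiber.1 hz
    have hπ := mem_normFiber.1 hπ
    push_cast at hz
    exact ⟨z.im ^ 2 - π.im ^ 2 * m, by linear_combination z.im ^ 2 * hπ - π.im ^ 2 * hz⟩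
  rcases hpZ.dvd_or_dvd hprod with h | h
  · exact .inl (key π hπ h)
  · refine .inr (key (star π) ?_ ?_)
    · change (star π).norm = _
      rwa [Zsqrtd.norm_conj]
    · simpa using h

/-- The two prime factors of a split odd prime are coprime. -/
theorem natCast_dvd_of_dvd_of_star_dvd {p : ℕ} (hp : p.Prime) (h2 : p ≠ 2) (h7 : p ≠ 7)
    {π : ℤ√(-7)} (hπ : π ∈ normFiber p) {z : ℤ√(-7)} (h : π ∣ z) (h' : star π ∣ z) :
    (p : ℤ√(-7)) ∣ z := by
  have hpZ : Prime (p : ℤ) := Nat.prime_iff_prime_int.1 hp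
  obtain ⟨w, hw⟩ := h
  obtain ⟨v, hv⟩ := h'
  rw [mem_normFiber] at hπ
  have hp2 : ¬ (p : ℤ) ∣ 2 := fun h => h2
    ((Nat.prime_dvd_prime_iff_eq hp Nat.prime_two).1 (by exact_mod_cast h))
  have hp7 : ¬ (p : ℤ) ∣ 7 := fun h => h7
    ((Nat.prime_dvd_prime_iff_eq hp (by norm_num)).1 (by exact_mod_cast h))
  have hnot : ¬ ((p : ℤ) ∣ π.re ∧ (p : ℤ) ∣ π.im) := by
    rintro ⟨⟨a, ha⟩, ⟨b, hb⟩⟩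
    refine hpZ.not_isUnit (isUnit_iff_dvd_one.2 ⟨a ^ 2 + 7 * b ^ 2, ?_⟩)
    refine mul_left_cancel₀ hpZ.ne_zero ?_
    rw [ha, hb] at hπ
    linear_combination -hπ
  have hdre : ¬ (p : ℤ) ∣ π.re := fun hd => hnot ⟨hd, by
    have : (p : ℤ) ∣ 7 * π.im ^ 2 := by
      obtain ⟨a, ha⟩ := hd
      exact ⟨1 - a * π.re, by linear_combination hπ - π.re * ha⟩
    exact hpZ.dvd_of_dvd_pow ((hpZ.dvd_or_dvd this).resolve_left hp7)⟩
  have hdim : ¬ (p : ℤ) ∣ π.im := fun hd => hnot ⟨by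
    have : (p : ℤ) ∣ π.re ^ 2 := by
      obtain ⟨b, hb⟩ := hd
      exact ⟨1 - 7 * b * π.im, by linear_combination hπ - 7 * π.im * hb⟩
    exact hpZ.dvd_of_dvd_pow this, hd⟩
  have hminus : π.re * z.im - π.im * z.re = p * w.im := by
    rw [hw]; simp; linear_combination w.im * hπ
  have hplus : π.re * z.im + π.im * z.re = p * v.im := by
    rw [hv]; simp; linear_combination v.im * hπ
  have hre : (p : ℤ) ∣ 2 * (π.im * z.re) := ⟨v.im - w.im, by linear_combination hplus - hminus⟩
  have him : (p : ℤ) ∣ 2 * (π.re * z.im) := ⟨v.im + w.im, by linear_combination hplus + hminus⟩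
  have : ((p : ℤ) : ℤ√(-7)) ∣ z := (Zsqrtd.intCast_dvd _ _).2
    ⟨(hpZ.dvd_or_dvd ((hpZ.dvd_or_dvd hre).resolve_left hp2)).resolve_left hdim,
      (hpZ.dvd_or_dvd ((hpZ.dvd_or_dvd him).resolve_left hp2)).resolve_left hdre⟩
  exact_mod_cast this

/-- Inclusion–exclusion over the two prime factors of a split odd prime. -/
theorem ncard_normFiber_split {p : ℕ} (hp : p.Prime) (h2 : p ≠ 2) (hχ : chiM7 p = 1) (m : ℕ) :
    (normFiber (p * m)).ncard + (normFiber (p * m) ∩ {z | (p : ℤ√(-7)) ∣ z}).ncard =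
      2 * (normFiber m).ncard := by
  have h7 : p ≠ 7 := by rintro rfl; revert hχ; decide
  obtain ⟨a, b, hab⟩ := exists_sq_add_seven_mul_sq hp h2 hχ
  obtain ⟨π, hπ⟩ : ∃ π, π ∈ normFiber p := ⟨⟨a, b⟩, mem_normFiber.2 hab⟩
  have hN : π.norm = p := hπ
  have hN' : (star π).norm = p := by rw [Zsqrtd.norm_conj, hN]
  have hp0 : (p : ℤ) ≠ 0 := by exact_mod_cast hp.ne_zero
  have hpdvd : (p : ℤ√(-7)) = π * star π := by
    rw [← Zsqrtd.norm_eq_mul_conj, hN, Int.cast_natCast]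
  have key := Set.ncard_union_add_ncard_inter ((π * ·) '' normFiber m) ((star π * ·) '' normFiber m)
    ((normFiber_finite m).image _) ((normFiber_finite m).image _)
  rw [ncard_image_mul_normFiber (hN ▸ hp0), ncard_image_mul_normFiber (hN' ▸ hp0),
    image_mul_normFiber hp.ne_zero hN, image_mul_normFiber hp.ne_zero hN', ← two_mul] at key
  rw [← key]
  congr 2 <;> ext z
  · constructor
    · intro hz
      exact (dvd_or_star_dvd hp hπ hz).imp (⟨hz, ·⟩) (⟨hz, ·⟩)
    · rintro (h | h) <;> exact h.1
  · constructor
    · rintro ⟨hz, hd⟩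
      have hd : (p : ℤ√(-7)) ∣ z := hd
      rw [hpdvd] at hd
      exact ⟨⟨hz, dvd_of_mul_right_dvd hd⟩, hz, dvd_of_mul_left_dvd hd⟩
    · rintro ⟨⟨hz, hd⟩, -, hd_star⟩
      exact ⟨hz, natCast_dvd_of_dvd_of_star_dvd hp h2 h7 hπ hd hd_star⟩

theorem normFiber_inter_dvd_eq_empty {p m : ℕ} (hp : p.Prime) (hpm : ¬ p ∣ m) :
    normFiber (p * m) ∩ {z | (p : ℤ√(-7)) ∣ z} = ∅ :=
  Set.eq_empty_of_forall_notMem fun _ hz => hpm (dvd_of_natCast_dvd hp hz.1 hz.2)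

theorem ncard_normFiber_inter_dvd {p : ℕ} (hp : p.Prime) (m : ℕ) :
    (normFiber (p * (p * m)) ∩ {z | (p : ℤ√(-7)) ∣ z}).ncard = (normFiber m).ncard := by
  have hN : (p : ℤ√(-7)).norm = (p * p : ℕ) := by
    rw [Zsqrtd.norm_natCast, Nat.cast_mul]
  have hpp : p * p ≠ 0 := mul_ne_zero hp.ne_zero hp.ne_zero
  rw [← mul_assoc, ← image_mul_normFiber hpp hN,
    ncard_image_mul_normFiber (by rw [hN]; exact_mod_cast hpp)]

theorem chiM7_trichotomy (d : ℕ) : chiM7 d = 1 ∨ chiM7 d = -1 ∨ (chiM7 d = 0 ∧ 7 ∣ d) := by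
  unfold chiM7
  split_ifs <;> simp
  omega

/-- The inclusion–exclusion recurrence for representation numbers at an odd prime. -/
theorem ncard_normFiber_prime_mul {p : ℕ} (hp : p.Prime) (h2 : p ≠ 2) (m : ℕ) :
    ((normFiber (p * m)).ncard : ℤ) +
      chiM7 p * (normFiber (p * m) ∩ {z | (p : ℤ√(-7)) ∣ z}).ncard =
      (1 + chiM7 p) * (normFiber m).ncard := by
  rcases chiM7_trichotomy p with h | h | ⟨h, h7⟩
  · have := ncard_normFiber_split hp h2 h m
    rw [h]
    push_cast [← @Nat.cast_inj ℤ] at this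
    linarith
  · have hinter : normFiber (p * m) ∩ {z | (p : ℤ√(-7)) ∣ z} = normFiber (p * m) :=
      Set.inter_eq_left.2 fun z hz => natCast_dvd_of_inert hp h2 h hz
    rw [h, hinter]
    ring
  · obtain rfl := (Nat.prime_dvd_prime_iff_eq (by norm_num) hp).1 h7
    rw [h, ncard_normFiber_seven_mul]
    ring

theorem ncard_normFiber_eq (n : ℕ) (hn : Odd n) :
    ((normFiber n).ncard : ℤ) = 2 * ∑ d ∈ n.divisors, chiM7 d := by
  induction n using Nat.strong_induction_on with
  | _ n ih =>
    rcases eq_or_ne n 1 with rfl | h1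
    · rw [ncard_normFiber_one]
      decide
    · obtain ⟨p, hp, m, rfl⟩ := Nat.exists_prime_and_dvd h1
      obtain ⟨hpo, hmo⟩ := Nat.odd_mul.1 hn
      have h2 : p ≠ 2 := by rintro rfl; exact absurd hpo (by decide)
      have lt_mul : ∀ k : ℕ, Odd k → k < p * k := fun k hk =>
        lt_mul_of_one_lt_left hk.pos hp.one_lt
      have rec_m := ncard_normFiber_prime_mul hp h2 m
      rw [ih m (lt_mul m hmo) hmo] at rec_m
      by_cases hpm : p ∣ m
      · obtain ⟨k, rfl⟩ := hpm
        have hko := (Nat.odd_mul.1 hmo).2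
        rw [ncard_normFiber_inter_dvd hp, ih k ((lt_mul k hko).trans (lt_mul _ hmo)) hko] at rec_m
        linarith [sum_divisors_prime_mul_mul hp hko.pos.ne']
      · rw [normFiber_inter_dvd_eq_empty hp hpm, Set.ncard_empty, Nat.cast_zero] at rec_m
        linarith [sum_divisors_prime_mul_s14 hp hmo.pos.ne' hpm]

theorem rep_x2_xy_2y2_x1mod2_y0mod2 (n : ℕ) (hn : 0 < n) :
    ({p : ℤ × ℤ | p.1 ^ 2 + p.1 * p.2 + 2 * p.2 ^ 2 = (n : ℤ) ∧ p.1 % 2 = 1 ∧ p.2 % 2 = 0}.ncard : ℤ) =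
      2 * Sdiv chiM7 n 1 - 4 * Sdiv chiM7 n 2 + 2 * Sdiv chiM7 n 4 := by
  have hχ2 : chiM7 2 = 1 := by decide
  rcases Nat.even_or_odd' n with ⟨m, rfl | rfl⟩
  · have hempty : {p : ℤ × ℤ | p.1 ^ 2 + p.1 * p.2 + 2 * p.2 ^ 2 = ((2 * m : ℕ) : ℤ) ∧
        p.1 % 2 = 1 ∧ p.2 % 2 = 0} = ∅ := by
      refine Set.eq_empty_of_forall_notMem ?_
      rintro ⟨x, y⟩ ⟨h, hx, hy⟩
      obtain ⟨a, rfl⟩ : ∃ a, x = 2 * a + 1 := ⟨x / 2, by dsimp at hx; omega⟩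
      obtain ⟨b, rfl⟩ : ∃ b, y = 2 * b := ⟨y / 2, by dsimp at hy; omega⟩
      push_cast at h
      ring_nf at h
      omega
    rw [hempty, Set.ncard_empty]
    have hm : m ≠ 0 := by omega
    by_cases h2m : 2 ∣ m
    · obtain ⟨k, rfl⟩ := h2m
      have := sum_divisors_prime_mul_mul Nat.prime_two (m := k) (by omega)
      rw [hχ2] at this
      have e2 : 2 * (2 * k) / 2 = 2 * k := by omega
      have e4 : 2 * (2 * k) / 4 = k := by omega
      rw [Sdiv, Sdiv, Sdiv, if_pos (one_dvd _), if_pos (dvd_mul_right _ _), if_pos (by omega),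
        Nat.div_one, e2, e4]
      push_cast
      linarith
    · have := sum_divisors_prime_mul_s14 Nat.prime_two hm h2m
      rw [hχ2] at this
      rw [Sdiv, Sdiv, Sdiv, if_pos (one_dvd _), if_pos (dvd_mul_right _ _), if_neg (by omega),
        Nat.div_one, Nat.mul_div_cancel_left _ two_pos]
      push_cast
      linarith
  · rw [Sdiv, Sdiv, Sdiv, if_pos (one_dvd _), if_neg (by omega), if_neg (by omega), Nat.div_one,
      mul_zero, mul_zero, sub_zero, add_zero, ← ncard_normFiber_eq _ ⟨m, rfl⟩]
    have himage : {p : ℤ × ℤ | p.1 ^ 2 + p.1 * p.2 + 2 * p.2 ^ 2 = ((2 * m + 1 : ℕ) : ℤ) ∧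
        p.1 % 2 = 1 ∧ p.2 % 2 = 0} =
        (fun z : ℤ√(-7) => (z.re - z.im, 2 * z.im)) '' normFiber (2 * m + 1) := by
      ext ⟨x, y⟩
      simp only [Set.mem_image, Set.mem_ofPred_eq, Prod.mk.injEq, mem_normFiber]
      constructor
      · rintro ⟨h, hx, hy⟩
        obtain ⟨b, rfl⟩ : ∃ b, y = 2 * b := ⟨y / 2, by omega⟩
        exact ⟨⟨x + b, b⟩, by linarith, by simp, rfl⟩
      · rintro ⟨z, h, rfl, rfl⟩
        refine ⟨by linarith, ?_, by omega⟩
        have hodd : Odd (z.re - z.im) := by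
          have : Odd ((z.re - z.im) ^ 2) := ⟨m - z.re * z.im - 3 * z.im ^ 2, by
            push_cast at h
            linarith⟩
          exact (Int.odd_pow' two_ne_zero).1 this
        exact Int.odd_iff.1 hodd
    rw [himage, Set.ncard_image_of_injective]
    intro z w h
    simp only [Prod.mk.injEq] at h
    ext <;> omega
end

section
/- For every positive integer n, the number of quadruples (x₁, x₂, x₃, x₄) ∈ ℤ⁴ with x₁² + x₂² + x₃² + x₄² = n, x₁ ≡ 1 (mod 2), and x₂ ≡ x₃ ≡ x₄ ≡ 0 (mod 2) equals (1 + χ₋₄(n)) σ(n) − 3σ(n/2) + 2σ(n/4). -/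
open Finset

/-- `sigmaDiv n k = σ(n/k) = ∑_{d ∣ n/k} d`, interpreted as `0` when `k` does not divide `n`. -/
def sigmaDiv (n k : ℕ) : ℤ := if k ∣ n then ∑ d ∈ (n / k).divisors, (d : ℤ) else 0

/-- The integers of `[-B, B]` congruent to `1` modulo `4`. -/
noncomputable def oneModFour (B : ℤ) : Finset ℤ := (Icc (-B) B).filter (fun x => x % 4 = 1)

/-- The number of quadruples with entries in `P` whose squares add up to `M`. -/
def quadCount (P : Finset ℤ) (M : ℤ) : ℤ :=
  ∑ v ∈ Fintype.piFinset (fun _ : Fin 4 => P), if ∑ i, v i ^ 2 = M then 1 else 0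

/-- The sum of `d` over the factorizations `4 * d * e = M` with `1 ≤ d, e ≤ B`. -/
noncomputable def factorSum (B M : ℤ) : ℤ :=
  ∑ p ∈ Icc 1 B ×ˢ Icc 1 B, if 4 * (p.1 * p.2) = M then p.1 else 0

/-- The triples `(x, d, e)` with `x` odd and `d, e` positive such that `x ^ 2 + 4 * d * e = N`. -/
noncomputable def formTriples (B N : ℤ) : Finset (ℤ × ℤ × ℤ) :=
  (Icc (-B) B ×ˢ Icc 1 B ×ˢ Icc 1 B).filter
    (fun t => t.1 % 2 = 1 ∧ t.1 ^ 2 + 4 * (t.2.1 * t.2.2) = N)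

theorem mem_formTriples {B N : ℤ} (hN : N ≤ B) (t : ℤ × ℤ × ℤ) :
    t ∈ formTriples B N ↔
      0 < t.2.1 ∧ 0 < t.2.2 ∧ t.1 % 2 = 1 ∧ t.1 ^ 2 + 4 * (t.2.1 * t.2.2) = N := by
  obtain ⟨x, d, e⟩ := t
  simp only [formTriples, mem_filter, mem_product, mem_Icc]
  constructor
  · rintro ⟨⟨-, ⟨hd, -⟩, he, -⟩, hx, h⟩
    exact ⟨by lia, by lia, hx, h⟩
  · rintro ⟨hd, he, hx, h⟩
    refine ⟨⟨⟨?_, ?_⟩, ⟨by lia, ?_⟩, by lia, ?_⟩, hx, h⟩ <;> nlinarith [mul_pos hd he, sq_nonneg x]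

theorem sum_formTriples_comp {B N : ℤ} (φ : ℤ × ℤ × ℤ → ℤ × ℤ × ℤ)
    (hφ : ∀ t ∈ formTriples B N, φ t ∈ formTriples B N) (hinv : ∀ t, φ (φ t) = t)
    (f : ℤ × ℤ × ℤ → ℤ) :
    ∑ t ∈ formTriples B N, f (φ t) = ∑ t ∈ formTriples B N, f t :=
  sum_nbij' φ φ hφ hφ (fun t _ => hinv t) (fun t _ => hinv t) (fun _ _ => rfl)

theorem odd_of_mem_formTriples {x d e N : ℤ} (hN : N % 8 = 5) (hx : x % 2 = 1)
    (h : x ^ 2 + 4 * (d * e) = N) : d % 2 = 1 ∧ e % 2 = 1 := by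
  have h1 : x ^ 2 % 8 = 1 := by
    obtain ⟨a, rfl⟩ : ∃ a, x = 2 * a + 1 := ⟨x / 2, by lia⟩
    obtain ⟨b, hb⟩ := Int.even_mul_succ_self a
    have : (2 * a + 1) ^ 2 = 8 * b + 1 := by linear_combination 4 * hb
    lia
  have h2 : d * e % 2 = 1 := by lia
  rcases Int.emod_two_eq_zero_or_one d with hd | hd <;>
    rcases Int.emod_two_eq_zero_or_one e with he | he <;> simp_all [Int.mul_emod]

theorem sum_formTriples_eq_zero {B N : ℤ} (hN : N ≤ B) (hN8 : N % 8 = 5) :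
    ∑ t ∈ formTriples B N, t.2.1 * (t.2.1 * t.2.2 - t.1 ^ 2) = 0 := by
  have hswap := sum_formTriples_comp (B := B) (N := N) (fun t => (t.1, t.2.2, t.2.1))
    (fun t ht => by
      rw [mem_formTriples hN] at ht ⊢
      exact ⟨ht.2.1, ht.1, ht.2.2.1, by linarith [ht.2.2.2, mul_comm t.2.1 t.2.2]⟩)
    (fun t => rfl) (fun t => t.2.1 * (t.2.1 * t.2.2 - t.1 ^ 2))
  have hneg := sum_formTriples_comp (B := B) (N := N) (fun t => (-t.1, t.2.1, t.2.2))
    (fun t ht => by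
      rw [mem_formTriples hN] at ht ⊢
      exact ⟨ht.1, ht.2.1, by lia, by linarith [ht.2.2.2, neg_sq t.1]⟩)
    (fun t => by simp) (fun t => t.1 * (t.2.1 ^ 2 - t.2.2 ^ 2))
  simp only [neg_mul, sum_neg_distrib] at hneg
  set G : ℤ × ℤ × ℤ → ℤ := fun t => (t.2.1 + t.2.2) * (t.2.1 + t.1) * (t.2.2 - t.1) with hG
  have hGsum : ∑ t ∈ formTriples B N, G t =
      2 * ∑ t ∈ formTriples B N, t.2.1 * (t.2.1 * t.2.2 - t.1 ^ 2) := by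
    rw [two_mul]
    nth_rewrite 2 [← hswap]
    rw [← add_zero (_ + _), ← (by linarith :
      -∑ t ∈ formTriples B N, t.1 * (t.2.1 ^ 2 - t.2.2 ^ 2) = 0), ← sum_neg_distrib,
      ← sum_add_distrib, ← sum_add_distrib]
    exact sum_congr rfl fun t _ => by simp only [hG]; ring
  have hR : ∑ t ∈ (formTriples B N).filter (fun t => t.2.1 + t.1 < t.2.2), G t = 0 := by
    refine sum_involution (fun t _ => (-t.1 - 2 * t.2.1, t.2.1, t.2.2 - t.1 - t.2.1))
      (fun t _ => by simp only [hG]; ring) (fun t _ h0 h => h0 ?_) (fun t ht => ?_)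
      (fun t _ => ?_)
    · have h1 : -t.1 - 2 * t.2.1 = t.1 := congrArg Prod.fst h
      have h2 : t.2.1 + t.1 = 0 := by lia
      simp [hG, h2]
    · rw [mem_filter, mem_formTriples hN] at ht ⊢
      obtain ⟨⟨hd, he, hx, h⟩, hlt⟩ := ht
      refine ⟨⟨hd, by lia, by lia, ?_⟩, by lia⟩
      simp only
      rw [← h]; ring
    · ext <;> simp only <;> ring
  have hRc : ∑ t ∈ (formTriples B N).filter (fun t => ¬ t.2.1 + t.1 < t.2.2), G t = 0 := by
    rw [← hR]
    have hmem : ∀ t ∈ formTriples B N, (-t.1, t.2.2, t.2.1) ∈ formTriples B N ∧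
        t.2.1 + t.1 ≠ t.2.2 := by
      intro t ht
      rw [mem_formTriples hN] at ht ⊢
      obtain ⟨hd, he, hx, h⟩ := ht
      have := odd_of_mem_formTriples hN8 hx h
      exact ⟨⟨he, hd, by lia, by linarith [neg_sq t.1, mul_comm t.2.1 t.2.2]⟩, by lia⟩
    refine sum_nbij' (fun t => (-t.1, t.2.2, t.2.1)) (fun t => (-t.1, t.2.2, t.2.1))
      (fun t ht => ?_) (fun t ht => ?_) (fun t _ => by simp) (fun t _ => by simp)
      (fun t _ => by simp only [hG]; ring)
    all_goals
      rw [mem_filter] at ht ⊢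
      have h := hmem t ht.1
      exact ⟨h.1, by have := ht.2; have := h.2; lia⟩
  have := sum_filter_add_sum_filter_not (formTriples B N) (fun t => t.2.1 + t.1 < t.2.2) G
  lia

theorem sum_factorSum_eq_zero {B N : ℤ} (hN : N ≤ B) (hN8 : N % 8 = 5) :
    ∑ x ∈ oneModFour B, (N - 5 * x ^ 2) * factorSum B (N - x ^ 2) = 0 := by
  set g : ℤ × ℤ × ℤ → ℤ := fun t => t.2.1 * (t.2.1 * t.2.2 - t.1 ^ 2) with hg
  have h1 : ∑ x ∈ oneModFour B, (N - 5 * x ^ 2) * factorSum B (N - x ^ 2) =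
      4 * ∑ t ∈ (formTriples B N).filter (fun t => t.1 % 4 = 1), g t := by
    have hset : (formTriples B N).filter (fun t => t.1 % 4 = 1) =
        (oneModFour B ×ˢ Icc 1 B ×ˢ Icc 1 B).filter
          (fun t => t.1 ^ 2 + 4 * (t.2.1 * t.2.2) = N) := by
      ext t
      simp only [formTriples, oneModFour, mem_filter, mem_product]
      constructor
      · tauto
      · rintro ⟨⟨⟨h1, h2⟩, h3⟩, h4⟩
        exact ⟨⟨⟨h1, h3⟩, by lia, h4⟩, h2⟩
    rw [hset, sum_filter, sum_product, mul_sum]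
    refine sum_congr rfl fun x _ => ?_
    rw [factorSum, mul_sum, mul_sum]
    refine sum_congr rfl fun p _ => ?_
    by_cases h : x ^ 2 + 4 * (p.1 * p.2) = N
    · rw [if_pos h, if_pos (by linarith), ← h]
      simp only [hg]; ring
    · rw [if_neg h, if_neg (fun h' => h (by linarith))]; ring
  have h2 : ∑ t ∈ (formTriples B N).filter (fun t => ¬ t.1 % 4 = 1), g t =
      ∑ t ∈ (formTriples B N).filter (fun t => t.1 % 4 = 1), g t := by
    refine sum_nbij' (fun t => (-t.1, t.2)) (fun t => (-t.1, t.2))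
      (fun t ht => ?_) (fun t ht => ?_) (fun t _ => by simp) (fun t _ => by simp)
      (fun t _ => by simp only [hg]; ring)
    all_goals
      rw [mem_filter, mem_formTriples hN] at ht ⊢
      obtain ⟨⟨hd, he, hx, h⟩, h4⟩ := ht
      exact ⟨⟨hd, he, by lia, by linarith [neg_sq t.1]⟩, by lia⟩
  have h3 := sum_filter_add_sum_filter_not (formTriples B N) (fun t => t.1 % 4 = 1) g
  have h4 : ∑ t ∈ formTriples B N, g t = 0 := sum_formTriples_eq_zero hN hN8
  lia

/-- The recurrence obtained by averaging `v i ^ 2` over the coordinates of quintuples. -/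
theorem sum_quadCount_eq_zero (P : Finset ℤ) (N : ℤ) :
    ∑ x ∈ P, (N - 5 * x ^ 2) * quadCount P (N - x ^ 2) = 0 := by
  set S := (Fintype.piFinset (fun _ : Fin 5 => P)).filter (fun v => ∑ i, v i ^ 2 = N) with hS
  have hsymm (i : Fin 5) : ∑ v ∈ S, v i ^ 2 = ∑ v ∈ S, v 0 ^ 2 := by
    have hmem : ∀ v ∈ S, v ∘ Equiv.swap 0 i ∈ S := by
      intro v hv
      simp only [hS, mem_filter, Fintype.mem_piFinset] at hv ⊢
      exact ⟨fun j => hv.1 _, by rw [← hv.2]; exact Equiv.sum_comp (Equiv.swap 0 i) (v · ^ 2)⟩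
    exact sum_nbij' (fun v => v ∘ Equiv.swap 0 i) (fun v => v ∘ Equiv.swap 0 i) hmem hmem
      (fun v _ => by ext; simp) (fun v _ => by ext; simp) (fun v _ => by simp)
  have hzero : ∑ v ∈ S, (N - 5 * v 0 ^ 2) = 0 := by
    have h1 : ∑ v ∈ S, ∑ i, v i ^ 2 = ∑ v ∈ S, N :=
      sum_congr rfl fun v hv => (mem_filter.mp hv).2
    rw [sum_comm, sum_congr rfl fun i _ => hsymm i] at h1
    rw [sum_sub_distrib, ← h1, ← mul_sum]
    simp
  rw [← hzero, hS, sum_filter]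
  have : ∑ x ∈ P, (N - 5 * x ^ 2) * quadCount P (N - x ^ 2) =
      ∑ q ∈ P ×ˢ Fintype.piFinset (fun _ : Fin 4 => P),
        if q.1 ^ 2 + ∑ i, q.2 i ^ 2 = N then N - 5 * q.1 ^ 2 else 0 := by
    rw [sum_product]
    refine sum_congr rfl fun x _ => ?_
    rw [quadCount, mul_sum]
    refine sum_congr rfl fun v _ => ?_
    by_cases h : x ^ 2 + ∑ i, v i ^ 2 = N
    · rw [if_pos h, if_pos (by linarith), mul_one]
    · rw [if_neg h, if_neg (fun h' => h (by linarith)), mul_zero]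
  rw [this]
  refine sum_nbij' (fun q => Fin.cons q.1 q.2) (fun v => (v 0, Fin.tail v)) ?_ ?_ ?_ ?_ ?_
  · rintro ⟨x, v⟩ h
    simp only [mem_product, Fintype.mem_piFinset] at h ⊢
    exact fun j => Fin.cases h.1 h.2 j
  · intro v h
    simp only [mem_product, Fintype.mem_piFinset] at h ⊢
    exact ⟨h 0, fun j => h j.succ⟩
  · intro q _; simp
  · intro v _; simp
  · intro q _; simp [Fin.sum_univ_succ]

theorem quadCount_of_neg (P : Finset ℤ) {M : ℤ} (hM : M < 0) : quadCount P M = 0 :=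
  sum_eq_zero fun v _ => if_neg fun h => by
    have : 0 ≤ ∑ i, v i ^ 2 := sum_nonneg fun i _ => sq_nonneg _
    lia

theorem factorSum_of_neg (B : ℤ) {M : ℤ} (hM : M < 0) : factorSum B M = 0 :=
  sum_eq_zero fun p hp => if_neg fun h => by
    simp only [mem_product, mem_Icc] at hp
    nlinarith

theorem quadCount_four {B : ℤ} (hB : 1 ≤ B) : quadCount (oneModFour B) 4 = 1 := by
  rw [quadCount, sum_eq_single (fun _ => 1)]
  · simp
  · intro v hv hne
    refine if_neg fun h => hne ?_
    simp only [Fintype.mem_piFinset, oneModFour, mem_filter] at hv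
    have h1 (i) : 1 ≤ v i ^ 2 := by
      have := (hv i).2
      have : v i ≠ 0 := by lia
      have := sq_pos_of_ne_zero this
      lia
    rw [Fin.sum_univ_four] at h
    have h2 (i) : v i ^ 2 = 1 := by
      have := h1 0; have := h1 1; have := h1 2; have := h1 3
      fin_cases i <;> simp only [Fin.zero_eta, Fin.mk_one, Fin.reduceFinMk] <;> lia
    ext i
    have := (hv i).2
    rcases sq_eq_sq_iff_eq_or_eq_neg.mp ((h2 i).trans (one_pow 2).symm) with h | h <;> lia
  · intro h
    refine absurd ?_ h
    simp only [Fintype.mem_piFinset, oneModFour, mem_filter, mem_Icc]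
    intro _
    exact ⟨⟨by lia, hB⟩, by norm_num⟩

theorem factorSum_four {B : ℤ} (hB : 1 ≤ B) : factorSum B 4 = 1 := by
  rw [factorSum, sum_eq_single (1, 1)]
  · simp
  · rintro ⟨d, e⟩ hp hne
    refine if_neg fun h => hne ?_
    simp only [mem_product, mem_Icc] at hp h
    have hd : d = 1 := by nlinarith
    have he : e = 1 := by nlinarith
    rw [hd, he]
  · intro h
    exact absurd (by simp [hB]) h

theorem quadCount_eq_factorSum {B : ℤ} (k : ℕ) (hk : 8 * (k : ℤ) + 5 ≤ B) :
    quadCount (oneModFour B) (8 * k + 4) = factorSum B (8 * k + 4) := by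
  induction k using Nat.strong_induction_on with
  | _ k ih =>
  rcases Nat.eq_zero_or_pos k with rfl | hpos
  · simp [quadCount_four (by lia : 1 ≤ B), factorSum_four (by lia : 1 ≤ B)]
  set N : ℤ := 8 * k + 5 with hN
  have hsum : ∑ x ∈ oneModFour B, (N - 5 * x ^ 2) *
      (quadCount (oneModFour B) (N - x ^ 2) - factorSum B (N - x ^ 2)) = 0 := by
    have h1 := sum_quadCount_eq_zero (oneModFour B) N
    have h2 := sum_factorSum_eq_zero hk (by lia : N % 8 = 5)
    simp only [mul_sub, sum_sub_distrib]
    rw [h1, h2, sub_zero]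
  rw [sum_eq_single 1] at hsum
  · have h1 : N - 1 ^ 2 = 8 * k + 4 := by rw [hN]; ring
    rw [h1] at hsum
    rcases mul_eq_zero.mp hsum with h | h
    · lia
    · lia
  · intro x hx hx1
    simp only [oneModFour, mem_filter] at hx
    obtain ⟨a, ha⟩ : ∃ a, x = 4 * a + 1 := ⟨x / 4, by lia⟩
    have ha0 : a ≠ 0 := by rintro rfl; exact hx1 (by simpa using ha)
    have hj : 0 < 2 * a ^ 2 + a := by
      rcases lt_or_gt_of_ne ha0 with h | h <;> nlinarith
    have hx2 : N - x ^ 2 = 8 * (k - (2 * a ^ 2 + a)) + 4 := by rw [hN, ha]; ring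
    rcases lt_or_ge ((k : ℤ) - (2 * a ^ 2 + a)) 0 with h | h
    · rw [quadCount_of_neg _ (by lia), factorSum_of_neg _ (by lia)]; simp
    · obtain ⟨l, hl⟩ := Int.eq_ofNat_of_zero_le h
      rw [hx2, hl, ih l (by lia) (by lia)]; simp
  · intro h
    refine absurd ?_ h
    simp only [oneModFour, mem_filter, mem_Icc]
    exact ⟨⟨by lia, by lia⟩, by norm_num⟩

theorem factorSum_four_mul {n : ℕ} (hn : 0 < n) {B : ℤ} (hB : (n : ℤ) ≤ B) :
    factorSum B (4 * n) = ∑ d ∈ n.divisors, (d : ℤ) := by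
  rw [factorSum, ← sum_filter]
  symm
  have hcast {d : ℕ} (hd : d ∣ n) : (d : ℤ) * ((n / d : ℕ) : ℤ) = n := by
    exact_mod_cast Nat.mul_div_cancel' hd
  refine sum_bij (fun d _ => ((d : ℤ), ((n / d : ℕ) : ℤ))) ?_ ?_ ?_ (fun _ _ => rfl)
  · intro d hd
    have hdvd := Nat.dvd_of_mem_divisors hd
    have h1 := Nat.pos_of_dvd_of_pos hdvd hn
    have h2 := Nat.le_of_dvd hn hdvd
    have h3 := Nat.div_pos h2 h1
    have h4 := Nat.div_le_self n d
    simp only [mem_filter, mem_product, mem_Icc, hcast hdvd]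
    lia
  · intro d _ d' _ h
    exact Nat.cast_injective (congrArg Prod.fst h)
  · rintro ⟨d, e⟩ h
    simp only [mem_filter, mem_product, mem_Icc] at h
    obtain ⟨⟨⟨hd, -⟩, he, -⟩, h⟩ := h
    lift d to ℕ using by lia
    lift e to ℕ using by lia
    have hde : d * e = n := by exact_mod_cast (by lia : (d : ℤ) * e = n)
    refine ⟨d, Nat.mem_divisors.mpr ⟨⟨e, hde.symm⟩, hn.ne'⟩, ?_⟩
    rw [← hde, Nat.mul_div_cancel_left e (by lia)]

theorem quadCount_oneModFour_eq_ncard {M B : ℤ} (hM : M ≤ B) :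
    quadCount (oneModFour B) M =
      ({y : Fin 4 → ℤ | ∑ i, y i ^ 2 = M ∧ ∀ i, y i % 4 = 1}.ncard : ℤ) := by
  have hset : {y : Fin 4 → ℤ | ∑ i, y i ^ 2 = M ∧ ∀ i, y i % 4 = 1} =
      ((Fintype.piFinset fun _ : Fin 4 => oneModFour B).filter
        (fun v => ∑ i, v i ^ 2 = M) : Finset (Fin 4 → ℤ)) := by
    ext y
    simp only [Set.mem_ofPred_eq, coe_filter, Fintype.mem_piFinset, oneModFour, mem_filter, mem_Icc]
    constructor
    · rintro ⟨h, hy⟩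
      refine ⟨fun i => ⟨?_, hy i⟩, h⟩
      have : y i ^ 2 ≤ ∑ j, y j ^ 2 :=
        single_le_sum (f := fun j => y j ^ 2) (fun j _ => sq_nonneg _) (mem_univ i)
      constructor <;> nlinarith
    · rintro ⟨hy, h⟩
      exact ⟨h, fun i => (hy i).2⟩
  rw [hset, Set.ncard_coe_finset, quadCount, sum_boole]

/-- The quadruples with sum of squares `n` whose first entry only is odd. -/
def firstOdd (n : ℤ) : Set (Fin 4 → ℤ) :=
  {x | x 0 ^ 2 + x 1 ^ 2 + x 2 ^ 2 + x 3 ^ 2 = n ∧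
    x 0 % 2 = 1 ∧ x 1 % 2 = 0 ∧ x 2 % 2 = 0 ∧ x 3 % 2 = 0}

/-- The Hadamard transform identifies half of `firstOdd n` with the quadruples congruent to `1`
modulo `4` whose squares add up to `4 * n`. -/
theorem ncard_firstOdd_sum_one {n : ℤ} (hn : n % 4 = 1) :
    (firstOdd n ∩ {x | (x 0 + x 1 + x 2 + x 3) % 4 = 1}).ncard =
      {y : Fin 4 → ℤ | ∑ i, y i ^ 2 = 4 * n ∧ ∀ i, y i % 4 = 1}.ncard := by
  refine Set.ncard_congr (fun x _ => ![x 0 + x 1 + x 2 + x 3, x 0 + x 1 - x 2 - x 3,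
    x 0 - x 1 + x 2 - x 3, x 0 - x 1 - x 2 + x 3]) ?_ ?_ ?_
  · rintro x ⟨⟨h, h0, h1, h2, h3⟩, hs⟩
    simp only [Set.mem_ofPred_eq] at hs
    refine ⟨?_, ?_⟩
    · simp only [Fin.sum_univ_four, Matrix.cons_val]
      linear_combination 4 * h
    · intro i
      fin_cases i <;> simp only [Fin.zero_eta, Fin.mk_one, Fin.reduceFinMk, Matrix.cons_val] <;> lia
  · intro x x' _ _ h
    have e0 := congrFun h 0
    have e1 := congrFun h 1
    have e2 := congrFun h 2
    have e3 := congrFun h 3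
    simp only [Matrix.cons_val] at e0 e1 e2 e3
    ext i
    fin_cases i <;> simp only [Fin.zero_eta, Fin.mk_one, Fin.reduceFinMk] <;> lia
  · rintro y ⟨h, hy⟩
    choose a ha using fun i => (⟨y i / 4, by have := hy i; lia⟩ : ∃ a, y i = 4 * a + 1)
    have hsq : 2 * (a 0 ^ 2 + a 1 ^ 2 + a 2 ^ 2 + a 3 ^ 2) + (a 0 + a 1 + a 2 + a 3) =
        (n - 1) / 2 := by
      rw [Fin.sum_univ_four, ha, ha, ha, ha] at h
      have : 8 * (2 * (a 0 ^ 2 + a 1 ^ 2 + a 2 ^ 2 + a 3 ^ 2) + (a 0 + a 1 + a 2 + a 3)) =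
          4 * (n - 1) := by linear_combination h
      lia
    have heven : (a 0 + a 1 + a 2 + a 3) % 2 = 0 := by lia
    refine ⟨![a 0 + a 1 + a 2 + a 3 + 1, a 0 + a 1 - a 2 - a 3, a 0 - a 1 + a 2 - a 3,
      a 0 - a 1 - a 2 + a 3], ⟨⟨?_, ?_⟩, ?_⟩, ?_⟩
    · simp only [Matrix.cons_val]
      have : 2 * ((n - 1) / 2) = n - 1 := by lia
      linear_combination 2 * hsq + this
    · simp only [Matrix.cons_val]
      lia
    · simp only [Set.mem_ofPred_eq, Matrix.cons_val]
      lia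
    · ext i
      fin_cases i <;> simp only [Fin.zero_eta, Fin.mk_one, Fin.reduceFinMk, Matrix.cons_val, ha] <;>
        ring

theorem finite_firstOdd (n : ℤ) : (firstOdd n).Finite := by
  refine (Set.Finite.pi' (fun _ : Fin 4 => Set.finite_Icc (-n) n)).subset ?_
  rintro x ⟨h, -⟩ i
  have hi : x i ^ 2 ≤ n := by
    have := sq_nonneg (x 0); have := sq_nonneg (x 1)
    have := sq_nonneg (x 2); have := sq_nonneg (x 3)
    fin_cases i <;> simp only [Fin.zero_eta, Fin.mk_one, Fin.reduceFinMk] <;> linarith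
  constructor <;> nlinarith

theorem ncard_firstOdd_of_mod_four_eq_one {n : ℕ} (hn : n % 4 = 1) :
    ((firstOdd n).ncard : ℤ) = 2 * ∑ d ∈ n.divisors, (d : ℤ) := by
  have hpos : 0 < n := by lia
  have hcount : ((firstOdd n ∩ {x | (x 0 + x 1 + x 2 + x 3) % 4 = 1}).ncard : ℤ) =
      ∑ d ∈ n.divisors, (d : ℤ) := by
    obtain ⟨m, hm⟩ : ∃ m, n = 4 * m + 1 := ⟨n / 4, by lia⟩
    rw [ncard_firstOdd_sum_one (by lia),
      ← quadCount_oneModFour_eq_ncard (by lia : 4 * (n : ℤ) ≤ 4 * n + 1),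
      ← factorSum_four_mul hpos (by lia : (n : ℤ) ≤ 4 * n + 1)]
    have := quadCount_eq_factorSum (B := 4 * n + 1) (2 * m) (by lia)
    rwa [show 8 * ((2 * m : ℕ) : ℤ) + 4 = 4 * n by lia] at this
  have hneg : (firstOdd n \ {x | (x 0 + x 1 + x 2 + x 3) % 4 = 1}).ncard =
      (firstOdd n ∩ {x | (x 0 + x 1 + x 2 + x 3) % 4 = 1}).ncard := by
    refine Set.ncard_congr (fun x _ => -x) ?_ (fun x x' _ _ h => neg_injective h) ?_
    · rintro x ⟨⟨h, h0, h1, h2, h3⟩, hs⟩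
      simp only [Set.mem_ofPred_eq] at hs
      simp only [firstOdd, Set.mem_inter_iff, Set.mem_ofPred_eq, Pi.neg_apply, neg_sq]
      exact ⟨⟨h, by lia, by lia, by lia, by lia⟩, by lia⟩
    · rintro x ⟨⟨h, h0, h1, h2, h3⟩, hs⟩
      simp only [Set.mem_ofPred_eq] at hs
      refine ⟨-x, ?_, neg_neg x⟩
      simp only [firstOdd, Set.mem_sdiff, Set.mem_ofPred_eq, Pi.neg_apply, neg_sq]
      exact ⟨⟨h, by lia, by lia, by lia, by lia⟩, by lia⟩
  have := Set.ncard_inter_add_ncard_sdiff_eq_ncard (firstOdd n)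
    {x | (x 0 + x 1 + x 2 + x 3) % 4 = 1} (finite_firstOdd n)
  lia

theorem firstOdd_eq_empty {n : ℤ} (hn : n % 4 ≠ 1) : firstOdd n = ∅ := by
  rw [Set.eq_empty_iff_forall_notMem]
  rintro x ⟨h, h0, h1, h2, h3⟩
  have hodd := Int.sq_mod_four_eq_one_of_odd (Int.odd_iff.mpr h0)
  have heven {z : ℤ} (hz : z % 2 = 0) : z ^ 2 % 4 = 0 := by
    obtain ⟨w, rfl⟩ : ∃ w, z = 2 * w := ⟨z / 2, by lia⟩
    rw [mul_pow]; lia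
  have := heven h1; have := heven h2; have := heven h3
  lia

theorem sum_divisors_two_pow_mul {u : ℕ} (hu : Odd u) (a : ℕ) :
    ∑ d ∈ (2 ^ a * u).divisors, (d : ℤ) = (2 ^ (a + 1) - 1) * ∑ d ∈ u.divisors, (d : ℤ) := by
  have hcop : Nat.Coprime (2 ^ a) u := (Nat.coprime_two_left.mpr hu).pow_left a
  have h := ArithmeticFunction.isMultiplicative_sigma (k := 1) |>.map_mul_of_coprime hcop
  rw [ArithmeticFunction.sigma_one_apply_prime_pow Nat.prime_two, Nat.geomSum_eq le_rfl,
    ArithmeticFunction.sigma_one_apply, ArithmeticFunction.sigma_one_apply] at h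
  have h1 : 1 ≤ 2 ^ (a + 1) := Nat.one_le_two_pow
  rw [← Nat.cast_sum, h]
  push_cast [Nat.div_one, h1]
  simp

theorem sigmaDiv_relation_of_even {n : ℕ} (hn : 0 < n) (h2 : n % 2 = 0) :
    sigmaDiv n 1 - 3 * sigmaDiv n 2 + 2 * sigmaDiv n 4 = 0 := by
  obtain ⟨a, u, hu, rfl⟩ := Nat.exists_eq_two_pow_mul_odd hn.ne'
  have hu2 := Nat.odd_iff.mp hu
  obtain _ | _ | a := a
  · lia
  · have h4 : ¬ 4 ∣ 2 ^ (0 + 1) * u := by lia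
    have hdiv : 2 ^ (0 + 1) * u / 2 = 2 ^ 0 * u := by lia
    rw [sigmaDiv, sigmaDiv, sigmaDiv, if_neg h4, if_pos (by lia), if_pos (by lia), hdiv,
      Nat.div_one, sum_divisors_two_pow_mul hu, sum_divisors_two_pow_mul hu]
    ring
  · have hpow : 2 ^ (a + 1 + 1) * u = 4 * (2 ^ a * u) := by ring
    have hdiv2 : 2 ^ (a + 1 + 1) * u / 2 = 2 ^ (a + 1) * u := by
      rw [pow_succ' 2 (a + 1), mul_assoc, Nat.mul_div_cancel_left _ two_pos]
    have hdiv4 : 2 ^ (a + 1 + 1) * u / 4 = 2 ^ a * u := by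
      rw [hpow, Nat.mul_div_cancel_left _ four_pos]
    rw [sigmaDiv, sigmaDiv, sigmaDiv, if_pos (one_dvd _), if_pos (by lia), if_pos (by lia), hdiv2,
      hdiv4, Nat.div_one, sum_divisors_two_pow_mul hu, sum_divisors_two_pow_mul hu,
      sum_divisors_two_pow_mul hu]
    ring

theorem rep_four_squares_1000_mod2 (n : ℕ) (hn : 0 < n) :
    ({x : Fin 4 → ℤ | x 0 ^ 2 + x 1 ^ 2 + x 2 ^ 2 + x 3 ^ 2 = (n : ℤ) ∧
        x 0 % 2 = 1 ∧ x 1 % 2 = 0 ∧ x 2 % 2 = 0 ∧ x 3 % 2 = 0}.ncard : ℤ) =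
      (1 + chiM4 n) * sigmaDiv n 1 - 3 * sigmaDiv n 2 + 2 * sigmaDiv n 4 := by
  change ((firstOdd n).ncard : ℤ) = _
  rcases Nat.mod_two_eq_zero_or_one n with h2 | h2
  · have hchi : chiM4 n = 0 := by
      rw [chiM4, if_neg (by lia), if_neg (by lia)]
    rw [firstOdd_eq_empty (by lia), hchi, add_zero, one_mul, sigmaDiv_relation_of_even hn h2]
    simp
  · have hs2 : sigmaDiv n 2 = 0 := if_neg (by lia)
    have hs4 : sigmaDiv n 4 = 0 := if_neg (by lia)
    rw [hs2, hs4]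
    by_cases h4 : n % 4 = 1
    · rw [ncard_firstOdd_of_mod_four_eq_one h4, chiM4, if_pos h4, sigmaDiv, if_pos (one_dvd n),
        Nat.div_one]
      ring
    · rw [firstOdd_eq_empty (by lia), chiM4, if_neg h4, if_pos (by lia)]
      simp
end
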